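/- arXiv:2505.03959 — 2 statements merged into one kernel-verified Lean document; each statement's English description precedes it below -/
import Mathlib

section
/- Let F be a 3-CNF formula with m clauses in which every clause contains three distinct variables, and let G_F be the graph of the construction with bipartition (A, B), where A consists of the cycle vertices with even index and B consists of the cycle vertices with odd index together with all clause vertices. Then G_F can be transformed into a disjoint union of bicliques by a sequence of at most 8m edge editions and vertex splittings if and only if F is satisfiable; moreover, the same equivalence holds when vertex splittings are allowed only on vertices of B (and their copies). -/
/- Common framework: bipartite graphs on vertex set `ℕ` with side labels,
   edge editions, vertex splittings, and the bicluster-editing numbers. -/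

namespace BCE

/-- A graph on a finite subset of `ℕ` equipped with a labelling of its
vertices into two sides `A` and `B`. -/
structure BGraph where
  A : Set ℕ
  B : Set ℕ
  finA : A.Finite
  finB : B.Finite
  Adj : ℕ → ℕ → Prop
  symm : ∀ u v, Adj u v → Adj v u

/-- The vertex set of a graph. -/
def verts (G : BGraph) : Set ℕ := G.A ∪ G.B

/-- The open neighbourhood of a vertex. -/
def nbhd (G : BGraph) (v : ℕ) : Set ℕ := {u | G.Adj v u}

/-- `G = (A, B, E)` is bipartite: the sides are disjoint and every edge joins
a vertex of `A` with a vertex of `B`. -/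
def Bipartite (G : BGraph) : Prop :=
  Disjoint G.A G.B ∧
    ∀ u v, G.Adj u v → (u ∈ G.A ∧ v ∈ G.B) ∨ (u ∈ G.B ∧ v ∈ G.A)

/-- A (bipartite) graph is a disjoint union of bicliques iff whenever
`a-b-c-d` is a walk, `a` and `d` are adjacent (equivalently, every connected
component is a complete bipartite graph). -/
def IsBicliqueUnion (G : BGraph) : Prop :=
  ∀ a b c d, G.Adj a b → G.Adj b c → G.Adj c d → G.Adj a d

/-- The editing operations: deletion of an edge, addition of an edge, and
splitting of a vertex `v` into `v` and a fresh vertex `v'` whose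
neighbourhoods `N1`, `N2` cover the neighbourhood of `v`. -/
inductive Op where
  | del : ℕ → ℕ → Op
  | add : ℕ → ℕ → Op
  | split : ℕ → ℕ → Set ℕ → Set ℕ → Op

/-- `op` is a vertex splitting. -/
def IsSplitOp : Op → Prop
  | Op.split _ _ _ _ => True
  | _ => False

/-- `OpStep sA sB op G G'` : performing the single operation `op` on `G`
yields `G'`; vertex splittings are allowed on side `A` (resp. `B`) only if
`sA` (resp. `sB`) is `true`.  A copy created by a splitting is put on the
same side as the split vertex. -/
inductive OpStep (sA sB : Bool) : Op → BGraph → BGraph → Prop where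
  | del {G G' : BGraph} {u v : ℕ}
      (h : G.Adj u v) (hA : G'.A = G.A) (hB : G'.B = G.B)
      (hadj : ∀ x y, G'.Adj x y ↔
        (G.Adj x y ∧ ¬((x = u ∧ y = v) ∨ (x = v ∧ y = u)))) :
      OpStep sA sB (Op.del u v) G G'
  | add {G G' : BGraph} {u v : ℕ}
      (hu : u ∈ G.A) (hv : v ∈ G.B) (h : ¬ G.Adj u v)
      (hA : G'.A = G.A) (hB : G'.B = G.B)
      (hadj : ∀ x y, G'.Adj x y ↔
        (G.Adj x y ∨ (x = u ∧ y = v) ∨ (x = v ∧ y = u))) :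
      OpStep sA sB (Op.add u v) G G'
  | split {G G' : BGraph} {v v' : ℕ} {N1 N2 : Set ℕ}
      (hside : (v ∈ G.A ∧ sA = true) ∨ (v ∈ G.B ∧ sB = true))
      (hfresh : v' ∉ verts G)
      (hcover : N1 ∪ N2 = nbhd G v)
      (hA : v ∈ G.A → G'.A = insert v' G.A ∧ G'.B = G.B)
      (hB : v ∈ G.B → G'.A = G.A ∧ G'.B = insert v' G.B)
      (hadj : ∀ x y, G'.Adj x y ↔
        ((G.Adj x y ∧ x ≠ v ∧ y ≠ v) ∨ (x = v ∧ y ∈ N1) ∨ (y = v ∧ x ∈ N1) ∨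
          (x = v' ∧ y ∈ N2) ∨ (y = v' ∧ x ∈ N2))) :
      OpStep sA sB (Op.split v v' N1 N2) G G'

/-- `ApplySeq sA sB L G G'` : applying the sequence of operations `L`
to `G` yields `G'`. -/
def ApplySeq (sA sB : Bool) : List Op → BGraph → BGraph → Prop
  | [], G, G' => G' = G
  | op :: L, G, G'' => ∃ G', OpStep sA sB op G G' ∧ ApplySeq sA sB L G' G''

/-- The sequence `L` transforms `G` into a disjoint union of bicliques. -/
def Solves (sA sB : Bool) (L : List Op) (G : BGraph) : Prop :=
  ∃ G', ApplySeq sA sB L G G' ∧ IsBicliqueUnion G'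

/-- `bcevs G` : the minimum length of a sequence of edge editions and vertex
splittings transforming `G` into a disjoint union of bicliques. -/
noncomputable def bcevs (G : BGraph) : ℕ :=
  sInf {n | ∃ L, L.length = n ∧ Solves true true L G}

/-- `bceovs G` (that is, `bceovs(G, A)`) : the minimum length of such a
sequence in which vertex splittings are applied only to vertices of the side
`A` (and their copies, which are also on side `A`). -/
noncomputable def bceovs (G : BGraph) : ℕ :=
  sInf {n | ∃ L, L.length = n ∧ Solves true false L G}

/-- The subgraph of `G` induced by `S`. -/
def induce (G : BGraph) (S : Set ℕ) : BGraph where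
  A := G.A ∩ S
  B := G.B ∩ S
  finA := G.finA.subset Set.inter_subset_left
  finB := G.finB.subset Set.inter_subset_left
  Adj := fun u v => G.Adj u v ∧ u ∈ S ∧ v ∈ S
  symm := fun u v h => ⟨G.symm u v h.1, h.2.2, h.2.1⟩

/-- `G` is a tree (as an abstract graph on its vertex set). -/
def IsTreeB (G : BGraph) : Prop :=
  (SimpleGraph.induce (verts G) (SimpleGraph.fromRel G.Adj)).IsTree

/-- `G` is connected. -/
def ConnectedB (G : BGraph) : Prop :=
  (SimpleGraph.induce (verts G) (SimpleGraph.fromRel G.Adj)).Connected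

/-- The set `S` induces a biclique in `G`: every vertex of `S` on side `A` is
adjacent to every vertex of `S` on side `B`. -/
def IsBicliqueOn (G : BGraph) (S : Set ℕ) : Prop :=
  ∀ u ∈ S ∩ G.A, ∀ v ∈ S ∩ G.B, G.Adj u v

/-- The set `S` induces a star in `G`: some centre `c ∈ S` is adjacent to all
other vertices of `S`, and every edge inside `S` uses the centre. -/
def IsStarOn (G : BGraph) (S : Set ℕ) : Prop :=
  ∃ c ∈ S, (∀ v ∈ S, v ≠ c → G.Adj c v) ∧
    (∀ u ∈ S, ∀ v ∈ S, G.Adj u v → u = c ∨ v = c)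

/-- An `A`-partitioning cover of `G`: a collection of subsets of `A ∪ B`
covering all vertices whose traces on `A` form a partition of `A` (every
vertex of `A` lies in a unique member of the collection). -/
def IsAPartCover (G : BGraph) (C : Set (Set ℕ)) : Prop :=
  (∀ X ∈ C, X ⊆ verts G) ∧
  (∀ v ∈ verts G, ∃ X ∈ C, v ∈ X) ∧
  (∀ a ∈ G.A, ∃! X, X ∈ C ∧ a ∈ X)

/-- The cost of an `A`-partitioning cover: each `a ∈ A` lying in the unique
set `X ∈ C` costs `|(B ∩ X) \ N(a)| + |N(a) \ X|`; each `b ∈ B` lying in `j`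
members of `C` costs `j - 1`. -/
noncomputable def coverCost (G : BGraph) (C : Set (Set ℕ)) : ℕ :=
  (∑ᶠ a ∈ G.A, ∑ᶠ X ∈ {X ∈ C | a ∈ X},
      (((G.B ∩ X) \ nbhd G a).ncard + ((nbhd G a) \ X).ncard)) +
  ∑ᶠ b ∈ G.B, ({X ∈ C | b ∈ X}.ncard - 1)

/-- The twin class of a vertex: all vertices of `G` with the same open
neighbourhood. -/
def twinClass (G : BGraph) (v : ℕ) : Set ℕ :=
  {u ∈ verts G | nbhd G u = nbhd G v}

/-- The twin classes of `G`. -/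
def twinClasses (G : BGraph) : Set (Set ℕ) :=
  {T | ∃ v ∈ verts G, T = twinClass G v}

/-- A cover is twin-adapted if every member contains each twin class either
entirely or not at all. -/
def TwinAdapted (G : BGraph) (C : Set (Set ℕ)) : Prop :=
  ∀ T ∈ twinClasses G, ∀ X ∈ C, T ∩ X = ∅ ∨ T ⊆ X

/-- `G` is a cycle with consecutive vertices `p 0, p 1, …, p (m-1)`
(indices modulo `m`), the vertices of even index forming side `A`. -/
def IsCycleWith (G : BGraph) (p : ℕ → ℕ) (m : ℕ) : Prop :=
  (∀ i j, i < m → j < m → p i = p j → i = j) ∧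
  G.A = p '' {i | i < m ∧ i % 2 = 0} ∧
  G.B = p '' {i | i < m ∧ i % 2 = 1} ∧
  (∀ x y, G.Adj x y ↔ ∃ i < m,
    (x = p i ∧ y = p ((i + 1) % m)) ∨ (y = p i ∧ x = p ((i + 1) % m)))

/-- `G` is a path with `l` edges and consecutive vertices `p 0, …, p l`,
the vertices of even index forming side `A`. -/
def IsPathWith (G : BGraph) (p : ℕ → ℕ) (l : ℕ) : Prop :=
  (∀ i j, i ≤ l → j ≤ l → p i = p j → i = j) ∧
  G.A = p '' {i | i ≤ l ∧ i % 2 = 0} ∧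
  G.B = p '' {i | i ≤ l ∧ i % 2 = 1} ∧
  (∀ x y, G.Adj x y ↔ ∃ i < l,
    (x = p i ∧ y = p (i + 1)) ∨ (y = p i ∧ x = p (i + 1)))

end BCE

namespace BCE

/-- A 3-CNF formula with `m` clauses, each clause `c < m` consisting of three
literals `lit c 0, lit c 1, lit c 2` (a literal is a variable together with a
polarity), the three variables of a clause being pairwise distinct. -/
structure CNF3 where
  m : ℕ
  lit : ℕ → Fin 3 → ℕ × Bool
  distinct : ∀ c, c < m → ∀ i j : Fin 3, (lit c i).1 = (lit c j).1 → i = j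

/-- The variable `v` occurs in clause `c`. -/
def OccIn (F : CNF3) (v c : ℕ) : Prop := ∃ i : Fin 3, (F.lit c i).1 = v

/-- The variable `v` occurs positively in clause `c`. -/
def PosIn (F : CNF3) (v c : ℕ) : Prop := ∃ i : Fin 3, F.lit c i = (v, true)

open Classical in
/-- `d(v)`: the number of clauses in which the variable `v` occurs. -/
noncomputable def occCount (F : CNF3) (v : ℕ) : ℕ :=
  ((Finset.range F.m).filter (fun c => OccIn F v c)).card

open Classical in
/-- The (0-based) position of clause `c` in the list of clauses in which `v`
occurs (ordered by clause index). -/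
noncomputable def occIndex (F : CNF3) (v c : ℕ) : ℕ :=
  ((Finset.range c).filter (fun c' => OccIn F v c')).card

open Classical in
/-- The (1-based) index on the cycle of `v` of the vertex `v_c` attached to
clause `c`: `6(j-1)+1` for a positive occurrence and `6(j-1)+3` for a
negative one, `j` being the 1-based occurrence index. -/
noncomputable def attachIdx (F : CNF3) (v c : ℕ) : ℕ :=
  if PosIn F v c then 6 * occIndex F v c + 1 else 6 * occIndex F v c + 3

/-- Encoding into `ℕ` of the cycle vertex `v_i` (1-based index `i`). -/
def cycVert (v i : ℕ) : ℕ := 2 * Nat.pair v i + 1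

/-- Encoding into `ℕ` of the clause vertex of clause `c`. -/
def clVert (c : ℕ) : ℕ := 2 * c

/-- The vertex set of the construction `G_F`: one vertex per clause, and the
cycle vertices `v_1, …, v_{6 d(v)}` for every variable `v`. -/
def VsetF (F : CNF3) : Set ℕ :=
  {x | ∃ c < F.m, x = clVert c} ∪
  {x | ∃ v i, 1 ≤ i ∧ i ≤ 6 * occCount F v ∧ x = cycVert v i}

/-- The side `A` of `G_F`: the cycle vertices of even index. -/
def AsetF (F : CNF3) : Set ℕ :=
  {x | ∃ v i, 1 ≤ i ∧ i ≤ 6 * occCount F v ∧ i % 2 = 0 ∧ x = cycVert v i}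

/-- The side `B` of `G_F`: the cycle vertices of odd index together with the
clause vertices. -/
def BsetF (F : CNF3) : Set ℕ :=
  {x | ∃ c < F.m, x = clVert c} ∪
  {x | ∃ v i, 1 ≤ i ∧ i ≤ 6 * occCount F v ∧ i % 2 = 1 ∧ x = cycVert v i}

/-- Oriented edges of `G_F`: consecutive cycle edges (cyclically), and the
edge from each clause vertex `c` to `v_c` for every variable `v` of `c`. -/
def AdjF0 (F : CNF3) (x y : ℕ) : Prop :=
  (∃ v i, 1 ≤ i ∧ i ≤ 6 * occCount F v ∧
    x = cycVert v i ∧ y = cycVert v (i % (6 * occCount F v) + 1)) ∨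
  (∃ c < F.m, ∃ v, OccIn F v c ∧ x = clVert c ∧ y = cycVert v (attachIdx F v c))

/-- The adjacency relation of the construction `G_F`. -/
def AdjF (F : CNF3) (x y : ℕ) : Prop := AdjF0 F x y ∨ AdjF0 F y x

/-- `G` is (an encoded copy of) the graph `G_F` of the construction, with the
bipartition `(A, B)` where `A` consists of the cycle vertices with even index
and `B` of the cycle vertices with odd index together with the clause
vertices. -/
def IsGF (F : CNF3) (G : BGraph) : Prop :=
  G.A = AsetF F ∧ G.B = BsetF F ∧ ∀ x y, G.Adj x y ↔ AdjF F x y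

/-- `F` is satisfiable. -/
def Satisfiable (F : CNF3) : Prop :=
  ∃ σ : ℕ → Bool, ∀ c < F.m, ∃ i : Fin 3, σ (F.lit c i).1 = (F.lit c i).2

open Classical in
/-- The number of clauses of `F` satisfied by the assignment `σ`. -/
noncomputable def satCount (F : CNF3) (σ : ℕ → Bool) : ℕ :=
  ((Finset.range F.m).filter
    (fun c => ∃ i : Fin 3, σ (F.lit c i).1 = (F.lit c i).2)).card

/-- `OPT(F)`: the maximum number of clauses of `F` simultaneously satisfiable
by a truth assignment. -/
noncomputable def maxSat (F : CNF3) : ℕ :=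
  sSup {t | ∃ σ : ℕ → Bool, t = satCount F σ}

open Classical in
/-- The number of clauses in which `v` occurs positively. -/
noncomputable def posCount (F : CNF3) (v : ℕ) : ℕ :=
  ((Finset.range F.m).filter (fun c => PosIn F v c)).card

/-- Whenever a variable occurs exactly twice positively and twice negatively,
its occurrence list alternates: positive occurrences are exactly those with
even (0-based) occurrence index. -/
def Alternating (F : CNF3) : Prop :=
  ∀ v, posCount F v = 2 → occCount F v = 4 →
    ∀ c < F.m, OccIn F v c → (PosIn F v c ↔ occIndex F v c % 2 = 0)

end BCE

namespace BCE

/-! ### The trace of a sequence of operations -/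

/-- A record of how `G` arose from `G₀`: the origin `π` of every vertex, the vertices created by
splittings, the oriented edges of `G₀` (orientation `R`) that were lost and the pairs of vertices
of `G₀` that were joined. -/
structure EditTrace (R : ℕ → ℕ → Prop) (G₀ G : BGraph) where
  π : ℕ → ℕ
  extra : Finset ℕ
  lost : Finset (ℕ × ℕ)
  gained : Finset (ℕ × ℕ)
  π_base : ∀ x ∈ verts G₀, π x = x
  verts_iff : ∀ x, x ∈ verts G ↔ x ∈ verts G₀ ∨ x ∈ extra
  extra_fresh : ∀ x ∈ extra, x ∉ verts G₀
  side_A : ∀ x ∈ G.A, π x ∈ G₀.A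
  side_B : ∀ x ∈ G.B, π x ∈ G₀.B
  adj_mem : ∀ x y, G.Adj x y → x ∈ verts G
  rep : ∀ x y, R x y → (x, y) ∉ lost → ∃ x' y', π x' = x ∧ π y' = y ∧ G.Adj x' y'
  proj : ∀ x y, G.Adj x y →
    G₀.Adj (π x) (π y) ∨ (π x, π y) ∈ gained ∨ (π y, π x) ∈ gained
  gained_side : ∀ p ∈ gained, p.1 ∈ G₀.A ∧ p.2 ∈ G₀.B

/-- The number of operations accounted for by a trace. -/
def EditTrace.cost {R : ℕ → ℕ → Prop} {G₀ G : BGraph} (t : EditTrace R G₀ G) : ℕ :=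
  t.extra.card + t.lost.card + t.gained.card

theorem EditTrace.exists_step {R : ℕ → ℕ → Prop} {G₀ G G' : BGraph}
    (hR : ∀ x y, R x y → ¬ R y x) {sA sB : Bool} {op : Op} (t : EditTrace R G₀ G)
    (h : OpStep sA sB op G G') : ∃ t' : EditTrace R G₀ G', t'.cost ≤ t.cost + 1 := by
  classical
  cases h with
  | @del _ _ u v h hA hB hadj =>
    have hverts : verts G' = verts G := by simp [verts, hA, hB]
    let e : ℕ × ℕ := if R (t.π u) (t.π v) then (t.π u, t.π v) else (t.π v, t.π u)
    refine ⟨⟨t.π, t.extra, insert e t.lost, t.gained, t.π_base, ?_, t.extra_fresh, ?_, ?_, ?_, ?_,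
      ?_, t.gained_side⟩, ?_⟩
    · rw [hverts]; exact t.verts_iff
    · rw [hA]; exact t.side_A
    · rw [hB]; exact t.side_B
    · intro x y hxy
      rw [hverts]; exact t.adj_mem x y ((hadj x y).1 hxy).1
    · intro x y hxy hne
      rw [Finset.mem_insert, not_or] at hne
      obtain ⟨x', y', rfl, rfl, hx'y'⟩ := t.rep x y hxy hne.2
      refine ⟨x', y', rfl, rfl, (hadj _ _).2 ⟨hx'y', ?_⟩⟩
      rintro (⟨rfl, rfl⟩ | ⟨rfl, rfl⟩)
      · exact hne.1 (by simp [e, hxy])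
      · exact hne.1 (by simp [e, hR _ _ hxy])
    · intro x y hxy
      exact t.proj x y ((hadj x y).1 hxy).1
    · have := Finset.card_insert_le e t.lost
      simp only [EditTrace.cost]; omega
  | @add _ _ u v hu hv h hA hB hadj =>
    have hverts : verts G' = verts G := by simp [verts, hA, hB]
    refine ⟨⟨t.π, t.extra, t.lost, insert (t.π u, t.π v) t.gained, t.π_base, ?_, t.extra_fresh,
      ?_, ?_, ?_, ?_, ?_, ?_⟩, ?_⟩
    · rw [hverts]; exact t.verts_iff
    · rw [hA]; exact t.side_A
    · rw [hB]; exact t.side_B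
    · intro x y hxy
      rw [hverts]
      rcases (hadj x y).1 hxy with h | ⟨rfl, rfl⟩ | ⟨rfl, rfl⟩
      · exact t.adj_mem x y h
      · exact Or.inl hu
      · exact Or.inr hv
    · intro x y hxy hne
      obtain ⟨x', y', rfl, rfl, hx'y'⟩ := t.rep x y hxy hne
      exact ⟨x', y', rfl, rfl, (hadj _ _).2 (Or.inl hx'y')⟩
    · intro x y hxy
      rcases (hadj x y).1 hxy with h | ⟨rfl, rfl⟩ | ⟨rfl, rfl⟩
      · rcases t.proj x y h with h | h | h <;> simp [h]
      · simp
      · simp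
    · intro p hp
      rcases Finset.mem_insert.1 hp with rfl | hp
      · exact ⟨t.side_A _ hu, t.side_B _ hv⟩
      · exact t.gained_side p hp
    · have := Finset.card_insert_le (t.π u, t.π v) t.gained
      simp only [EditTrace.cost]; omega
  | @split _ _ v v' N1 N2 hside hfresh hcover hA hB hadj =>
    have hverts : verts G' = insert v' (verts G) := by
      rcases hside with ⟨hv, -⟩ | ⟨hv, -⟩
      · rw [verts, (hA hv).1, (hA hv).2, Set.insert_union]; rfl
      · rw [verts, (hB hv).1, (hB hv).2, Set.union_insert]; rfl
    have hvmem : v ∈ verts G := hside.imp (fun h => h.1) (fun h => h.1)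
    have hπ : ∀ x ∈ verts G, Function.update t.π v' (t.π v) x = t.π x := by
      intro x hx
      exact Function.update_of_ne (by rintro rfl; exact hfresh hx) _ _
    have hπ' : Function.update t.π v' (t.π v) v' = t.π v := Function.update_self ..
    have hmem1 : ∀ x ∈ N1, G.Adj v x := fun x hx => by
      have : x ∈ nbhd G v := hcover ▸ Or.inl hx
      exact this
    have hmem2 : ∀ x ∈ N2, G.Adj v x := fun x hx => by
      have : x ∈ nbhd G v := hcover ▸ Or.inr hx
      exact this
    have hmemr : ∀ x y, G.Adj x y → y ∈ verts G := fun x y h => t.adj_mem y x (G.symm _ _ h)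
    refine ⟨⟨Function.update t.π v' (t.π v), insert v' t.extra, t.lost, t.gained, ?_, ?_, ?_, ?_,
      ?_, ?_, ?_, ?_, t.gained_side⟩, ?_⟩
    · intro x hx
      rw [hπ x ((t.verts_iff x).2 (Or.inl hx))]; exact t.π_base x hx
    · intro x
      rw [hverts, Set.mem_insert_iff, t.verts_iff, Finset.mem_insert]; tauto
    · intro x hx
      rcases Finset.mem_insert.1 hx with rfl | hx
      · exact fun h => hfresh ((t.verts_iff x).2 (Or.inl h))
      · exact t.extra_fresh x hx
    · intro x hx
      by_cases hxG : x ∈ G.A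
      · rw [hπ x (Or.inl hxG)]; exact t.side_A x hxG
      · rcases hside with ⟨hv, -⟩ | ⟨hv, -⟩
        · rw [(hA hv).1] at hx
          rcases hx with rfl | hx
          · rw [hπ']; exact t.side_A v hv
          · exact absurd hx hxG
        · rw [(hB hv).1] at hx; exact absurd hx hxG
    · intro x hx
      by_cases hxG : x ∈ G.B
      · rw [hπ x (Or.inr hxG)]; exact t.side_B x hxG
      · rcases hside with ⟨hv, -⟩ | ⟨hv, -⟩
        · rw [(hA hv).2] at hx; exact absurd hx hxG
        · rw [(hB hv).2] at hx
          rcases hx with rfl | hx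
          · rw [hπ']; exact t.side_B v hv
          · exact absurd hx hxG
    · intro x y hxy
      rw [hverts, Set.mem_insert_iff]
      rcases (hadj x y).1 hxy with h | ⟨rfl, h⟩ | ⟨rfl, h⟩ | ⟨rfl, h⟩ | ⟨rfl, h⟩
      · exact Or.inr (t.adj_mem x y h.1)
      · exact Or.inr hvmem
      · exact Or.inr (hmemr _ _ (hmem1 x h))
      · exact Or.inl rfl
      · exact Or.inr (hmemr _ _ (hmem2 x h))
    · intro x y hxy hne
      obtain ⟨x', y', rfl, rfl, h⟩ := t.rep x y hxy hne
      have hx' := hπ x' (t.adj_mem _ _ h)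
      have hy' := hπ y' (hmemr _ _ h)
      by_cases hxv : x' = v
      · subst hxv
        have : y' ∈ N1 ∪ N2 := hcover ▸ h
        rcases this with h | h
        · exact ⟨x', y', hx', hy', (hadj _ _).2 (by simp [h])⟩
        · exact ⟨v', y', hπ', hy', (hadj _ _).2 (by simp [h])⟩
      · by_cases hyv : y' = v
        · subst hyv
          have : x' ∈ N1 ∪ N2 := hcover ▸ G.symm _ _ h
          rcases this with h | h
          · exact ⟨x', y', hx', hy', (hadj _ _).2 (by simp [h])⟩
          · exact ⟨x', v', hx', hπ', (hadj _ _).2 (by simp [h])⟩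
        · exact ⟨x', y', hx', hy', (hadj _ _).2 (Or.inl ⟨h, hxv, hyv⟩)⟩
    · intro x y hxy
      rcases (hadj x y).1 hxy with h | ⟨rfl, h⟩ | ⟨rfl, h⟩ | ⟨rfl, h⟩ | ⟨rfl, h⟩
      · rw [hπ x (t.adj_mem x y h.1), hπ y (hmemr x y h.1)]; exact t.proj x y h.1
      · rw [hπ x hvmem, hπ y (hmemr _ _ (hmem1 y h))]; exact t.proj x y (hmem1 y h)
      · rw [hπ y hvmem, hπ x (hmemr _ _ (hmem1 x h))]
        exact t.proj x y (G.symm _ _ (hmem1 x h))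
      · rw [hπ', hπ y (hmemr _ _ (hmem2 y h))]; exact t.proj v y (hmem2 y h)
      · rw [hπ', hπ x (hmemr _ _ (hmem2 x h))]
        exact t.proj x v (G.symm _ _ (hmem2 x h))
    · have := Finset.card_insert_le v' t.extra
      simp only [EditTrace.cost]; omega

theorem EditTrace.exists_of_applySeq {R : ℕ → ℕ → Prop} {G₀ G' : BGraph}
    (hR : ∀ x y, R x y → ¬ R y x) {sA sB : Bool} (L : List Op) {G : BGraph}
    (t : EditTrace R G₀ G) (h : ApplySeq sA sB L G G') :
    ∃ t' : EditTrace R G₀ G', t'.cost ≤ t.cost + L.length := by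
  induction L generalizing G with
  | nil => obtain rfl : G' = G := h; exact ⟨t, le_rfl⟩
  | cons op L ih =>
    obtain ⟨G₁, h₁, h₂⟩ := h
    obtain ⟨t₁, ht₁⟩ := t.exists_step hR h₁
    obtain ⟨t₂, ht₂⟩ := ih t₁ h₂
    exact ⟨t₂, by simp only [List.length_cons]; omega⟩

/-- The trace of the empty sequence of operations. -/
def EditTrace.refl {R : ℕ → ℕ → Prop} {G : BGraph} (hR : ∀ x y, R x y → G.Adj x y)
    (hmem : ∀ x y, G.Adj x y → x ∈ verts G) : EditTrace R G G where
  π := id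
  extra := ∅
  lost := ∅
  gained := ∅
  π_base := by simp
  verts_iff := by simp
  extra_fresh := by simp
  side_A := by simp
  side_B := by simp
  adj_mem := hmem
  rep := fun x y h _ => ⟨x, y, rfl, rfl, hR x y h⟩
  proj := fun x y h => Or.inl h
  gained_side := by simp

theorem EditTrace.cost_refl {R : ℕ → ℕ → Prop} {G : BGraph} (hR : ∀ x y, R x y → G.Adj x y)
    (hmem : ∀ x y, G.Adj x y → x ∈ verts G) : (EditTrace.refl hR hmem).cost = 0 := rfl

/-! ### The counting argument on a cycle -/

theorem sum_range_shift {n : ℕ} {f : ℕ → ℤ} (hf : ∀ i, f (i + n) = f i) :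
    ∑ i ∈ Finset.range n, f (i + 1) = ∑ i ∈ Finset.range n, f i := by
  have h1 := Finset.sum_range_succ f n
  have h2 := Finset.sum_range_succ' f n
  have h3 := hf 0
  rw [zero_add] at h3
  linarith

/-- On a cycle on which every window of three consecutive edges is hit exactly once, up to the
overlaps at the vertices selected by `ι`, no vertex is selected: the selected vertices lie in
only two of the three residue classes, and consecutive ones lie in consecutive classes. -/
theorem no_overlap_of_windows {d : ℕ} (hd : 1 ≤ d) {δ ι : ℕ → ℕ}
    (hδ : ∀ i, δ i ≤ 1) (hι : ∀ i, ι i ≤ 1) (pδ : ∀ i, δ (i + 6 * d) = δ i)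
    (hpos : ∀ j, ι j = 1 → (j + 1) % 6 = 0 ∨ (j + 1) % 6 = 2)
    (hw : ∀ i, δ i + δ (i + 1) + δ (i + 2) = 1 + ι i + ι (i + 1))
    (hov : ∀ j, ι j = 1 → δ j = 1 ∧ δ (j + 1) = 1) (j : ℕ) : ι j = 0 := by
  have key : ∀ p, ι p = 1 → ¬ ∀ q, ι q = 1 → q % 3 ≠ (p + 1) % 3 := by
    intro p hp hq
    have pattern : ∀ k, δ (p + 1 + 3 * k) = 1 ∧ δ (p + 2 + 3 * k) = 0 ∧ δ (p + 3 + 3 * k) = 0 := by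
      have next : ∀ a, ι (a + 1) = 0 → δ a = 1 → δ (a + 1) = 0 → δ (a + 2) = 0 := by
        intro a h1 h2 h3
        have := hw a
        have h4 : ι a = 0 := by
          by_contra h
          have := (hov a (by have := hι a; omega)).2
          omega
        omega
      have nosel : ∀ a, δ (a + 1) = 0 → ι (a + 1) = 0 := by
        intro a h
        by_contra h'
        have := (hov (a + 1) (by have := hι (a + 1); omega)).1
        omega
      intro k
      induction k with
      | zero =>
        have h1 := hov p hp
        have h2 := hw p
        have h3 : ι (p + 1) = 0 := by
          by_contra h
          have := hpos _ hp
          have := hpos (p + 1) (by have := hι (p + 1); omega)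
          omega
        have h4 : δ (p + 2) = 0 := by omega
        exact ⟨h1.2, h4, next (p + 1) (nosel _ h4) h1.2 h4⟩
      | succ k ih =>
        obtain ⟨h1, h2, h3⟩ := ih
        have e1 : p + 1 + 3 * (k + 1) = p + 1 + 3 * k + 3 := by ring
        have e2 : p + 2 + 3 * (k + 1) = p + 1 + 3 * k + 3 + 1 := by ring
        have e3 : p + 3 + 3 * (k + 1) = p + 1 + 3 * k + 3 + 2 := by ring
        have f2 : p + 2 + 3 * k = p + 1 + 3 * k + 1 := by ring
        have f3 : p + 3 + 3 * k = p + 1 + 3 * k + 2 := by ring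
        rw [e1, e2, e3]
        rw [f2] at h2
        rw [f3] at h3
        set a := p + 1 + 3 * k with ha
        have w1 := hw (a + 1)
        have w2 := hw (a + 2)
        simp only [add_assoc, Nat.reduceAdd] at w1 w2 ⊢
        have g1 : δ (a + 3) = 1 := by have := hδ (a + 3); omega
        have s2 : ι (a + 2) = 0 := nosel (a + 1) h3
        have s3 : ι (a + 3) = 0 := by
          by_contra h
          have := hq (a + 3) (by have := hι (a + 3); omega)
          omega
        have g2 : δ (a + 4) = 0 := by omega
        exact ⟨g1, g2, next (a + 3) (nosel (a + 3) g2) g1 g2⟩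
    have h1 := (pattern (2 * d - 1)).2.2
    have h2 := pδ p
    have h3 := (hov p hp).1
    rw [show p + 3 + 3 * (2 * d - 1) = p + 6 * d by omega] at h1
    omega
  by_contra h
  have hj : ι j = 1 := by have := hι j; omega
  by_cases h0 : ∃ p, ι p = 1 ∧ (p + 1) % 3 = 0
  · obtain ⟨p, hp, hp0⟩ := h0
    refine key p hp fun q hq => ?_
    have := hpos q hq
    omega
  · push Not at h0
    refine key j hj fun q hq => ?_
    have := hpos j hj
    have := hpos q hq
    have := h0 j hj
    have := h0 q hq
    omega

/-- The counting bound for a cycle of length `6 * d`.  Here `δ i = 1` if the edge from position `i`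
to `i + 1` is lost, `s i` is the number of additional copies of the vertex at position `i`,
`ε j = 1` if the vertex at position `j + 1` has two copies with a neighbour on the cycle, `ι j = 1`
if it is selected and has a copy without neighbours on the cycle, and `α i = 1` if the vertices at
positions `i` and `i + 3` were joined. -/
theorem cycle_count {d : ℕ} (hd : 1 ≤ d) {δ ε ι α s : ℕ → ℕ} {a : ℕ}
    (hδ : ∀ i, δ i ≤ 1) (hε : ∀ i, ε i ≤ 1) (hι : ∀ i, ι i ≤ 1)
    (pδ : ∀ i, δ (i + 6 * d) = δ i) (pε : ∀ i, ε (i + 6 * d) = ε i)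
    (pι : ∀ i, ι (i + 6 * d) = ι i) (ps : ∀ i, s (i + 6 * d) = s i)
    (hpos : ∀ j, ι j = 1 → (j + 1) % 6 = 0 ∨ (j + 1) % 6 = 2)
    (hw : ∀ i, 1 ≤ δ i + δ (i + 1) + δ (i + 2) + ε i + ε (i + 1) + α i)
    (hεs : ∀ j, ε j = 1 → 1 ≤ s (j + 1))
    (hειs : ∀ j, ε j = 1 → ι j = 1 → 2 ≤ s (j + 1))
    (hιs : ∀ j, ι j = 1 → δ j = 0 ∨ δ (j + 1) = 0 → 1 ≤ s (j + 1))
    (hα : ∑ i ∈ Finset.range (6 * d), α i ≤ 2 * a) :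
    6 * d + 2 * ∑ i ∈ Finset.range (6 * d), ι i ≤
        3 * (∑ i ∈ Finset.range (6 * d), δ i + ∑ i ∈ Finset.range (6 * d), s i + a) ∧
    (3 * (∑ i ∈ Finset.range (6 * d), δ i + ∑ i ∈ Finset.range (6 * d), s i + a) ≤
        6 * d + 2 * ∑ i ∈ Finset.range (6 * d), ι i →
      (∀ i, s i = 0) ∧ (∀ i, ι i = 0) ∧ ∀ i, δ i + δ (i + 1) + δ (i + 2) = 1) := by
  set n := 6 * d with hn
  obtain ⟨β, hβ⟩ : ∃ β : ℕ → ℕ, ∀ j, β j = if ι j = 1 ∧ δ j = 1 ∧ δ (j + 1) = 1 then 1 else 0 :=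
    ⟨_, fun _ => rfl⟩
  have pβ : ∀ i, β (i + n) = β i := by
    intro i
    rw [hβ, hβ, pι, pδ, show i + n + 1 = i + 1 + n by ring, pδ]
  let w : ℕ → ℤ := fun i =>
    δ i + δ (i + 1) + δ (i + 2) + ε i + ε (i + 1) + α i - 1 - β i - β (i + 1)
  let u : ℕ → ℤ := fun j => 3 * s (j + 1) - 2 * ε j - 2 * ι j + 2 * β j
  have hw0 : ∀ i, 0 ≤ w i := by
    intro i
    simp only [w]
    have h1 := hβ i
    have h2 := hβ (i + 1)
    have h3 := hw i
    have h4 := hpos i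
    have h5 := hpos (i + 1)
    rw [show i + 1 + 1 = i + 2 by ring] at h2
    split_ifs at h1 h2 <;> omega
  have hu0 : ∀ j, 0 ≤ u j ∧ (u j ≤ 0 → s (j + 1) = 0) := by
    intro j
    simp only [u]
    have h1 := hβ j
    have h2 := hεs j
    have h3 := hειs j
    have h4 := hιs j
    have := hδ j
    have := hδ (j + 1)
    have := hε j
    have := hι j
    split_ifs at h1 with hc
    · constructor <;> omega
    · constructor <;> omega
  have sδ1 : ∑ i ∈ Finset.range n, (δ (i + 1) : ℤ) = ∑ i ∈ Finset.range n, (δ i : ℤ) :=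
    sum_range_shift (f := fun i => (δ i : ℤ)) (fun i => by simp only [pδ])
  have sδ2 : ∑ i ∈ Finset.range n, (δ (i + 2) : ℤ) = ∑ i ∈ Finset.range n, (δ i : ℤ) := by
    rw [← sδ1]
    exact sum_range_shift (f := fun i => (δ (i + 1) : ℤ))
      (fun i => by simp only [show i + n + 1 = i + 1 + n by ring, pδ])
  have sε1 : ∑ i ∈ Finset.range n, (ε (i + 1) : ℤ) = ∑ i ∈ Finset.range n, (ε i : ℤ) :=
    sum_range_shift (f := fun i => (ε i : ℤ)) (fun i => by simp only [pε])
  have sβ1 : ∑ i ∈ Finset.range n, (β (i + 1) : ℤ) = ∑ i ∈ Finset.range n, (β i : ℤ) :=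
    sum_range_shift (f := fun i => (β i : ℤ)) (fun i => by simp only [pβ])
  have ss1 : ∑ i ∈ Finset.range n, (s (i + 1) : ℤ) = ∑ i ∈ Finset.range n, (s i : ℤ) :=
    sum_range_shift (f := fun i => (s i : ℤ)) (fun i => by simp only [ps])
  have total : ∑ i ∈ Finset.range n, w i + ∑ i ∈ Finset.range n, u i =
      3 * ∑ i ∈ Finset.range n, (δ i : ℤ) + 3 * ∑ i ∈ Finset.range n, (s i : ℤ) +
        ∑ i ∈ Finset.range n, (α i : ℤ) - n - 2 * ∑ i ∈ Finset.range n, (ι i : ℤ) := by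
    simp only [w, u, Finset.sum_add_distrib, Finset.sum_sub_distrib, ← Finset.mul_sum, sδ1, sδ2,
      sε1, sβ1, ss1, Finset.sum_const, Finset.card_range, nsmul_eq_mul, mul_one]
    ring
  have sw0 : 0 ≤ ∑ i ∈ Finset.range n, w i := Finset.sum_nonneg fun i _ => hw0 i
  have su0 : 0 ≤ ∑ i ∈ Finset.range n, u i := Finset.sum_nonneg fun i _ => (hu0 i).1
  have sα0 : 0 ≤ ∑ i ∈ Finset.range n, (α i : ℤ) := Finset.sum_nonneg fun i _ => by positivity
  zify at hα ⊢
  refine ⟨by linarith, fun hle => ?_⟩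
  have hw1 : ∑ i ∈ Finset.range n, w i = 0 := by linarith
  have hu1 : ∑ i ∈ Finset.range n, u i = 0 := by linarith
  have hα1 : ∑ i ∈ Finset.range n, (α i : ℤ) = 0 := by linarith
  rw [Finset.sum_eq_zero_iff_of_nonneg fun i _ => hw0 i] at hw1
  rw [Finset.sum_eq_zero_iff_of_nonneg fun i _ => (hu0 i).1] at hu1
  rw [Finset.sum_eq_zero_iff_of_nonneg fun i _ => by positivity] at hα1
  have hnpos : 0 < n := by omega
  have redδ : ∀ i, δ i = δ (i % n) := fun i => ((Function.Periodic.map_mod_nat (f := δ) pδ) i).symm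
  have redι : ∀ i, ι i = ι (i % n) := fun i => ((Function.Periodic.map_mod_nat (f := ι) pι) i).symm
  have reds : ∀ i, s i = s (i % n) := fun i => ((Function.Periodic.map_mod_nat (f := s) ps) i).symm
  have hs : ∀ i, s i = 0 := by
    have h1 : ∀ i, s (i + 1) = 0 := by
      intro i
      rw [reds, ← Nat.mod_add_mod, ← reds]
      exact (hu0 _).2 (hu1 _ (Finset.mem_range.2 (Nat.mod_lt _ hnpos))).le
    intro i
    rw [← ps, show i + n = i + (n - 1) + 1 by omega]
    exact h1 _
  have hε0 : ∀ i, ε i = 0 := fun i => by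
    have := hεs i; have := hε i; have := hs (i + 1); omega
  have hov : ∀ j, ι j = 1 → δ j = 1 ∧ δ (j + 1) = 1 := fun j hj => by
    have := hιs j hj; have := hs (j + 1); have := hδ j; have := hδ (j + 1); omega
  have hβι : ∀ j, β j = ι j := fun j => by
    rw [hβ]
    by_cases hj : ι j = 1
    · simp [hj, hov j hj]
    · have := hι j
      simp only [hj, false_and, if_false]; omega
  have hwin : ∀ i, δ i + δ (i + 1) + δ (i + 2) = 1 + ι i + ι (i + 1) := by
    intro i
    have hi := Finset.mem_range.2 (Nat.mod_lt i hnpos)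
    have h1 := hw1 _ hi
    have h2 := hα1 _ hi
    simp only [w, hε0, hβι] at h1
    have e : ∀ k, (i % n + k) % n = (i + k) % n := fun k => Nat.mod_add_mod _ _ _
    rw [redδ i, redδ (i + 1), redδ (i + 2), redι i, redι (i + 1), ← e 1, ← e 2, ← redδ (_ + 1),
      ← redδ (_ + 2), ← redι (_ + 1)]
    omega
  have hι0 := no_overlap_of_windows hd hδ hι pδ hpos hwin hov
  refine ⟨fun i => by exact_mod_cast hs i, fun i => by exact_mod_cast hι0 i, fun i => ?_⟩
  have := hwin i
  rw [hι0, hι0] at this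
  exact_mod_cast this

/-- The counting bound for a clause vertex with three incident edges, `ret j` telling that the
`j`-th one survives, at the copy `g j` of the clause vertex. -/
theorem clause_count {ret : Fin 3 → Prop} {g : Fin 3 → ℕ} {ι : Fin 3 → ℕ} {l s a : ℕ}
    (hl : ∀ T : Finset (Fin 3), (∀ j ∈ T, ¬ ret j) → T.card ≤ l)
    (hs : ∀ T : Finset (Fin 3), (∀ j ∈ T, ret j) → Set.InjOn g T → T.card ≤ s + 1)
    (ha : ∀ j, ret j → ι j ≠ 1 → ∀ T : Finset (Fin 3), j ∉ T → (∀ k ∈ T, ret k ∧ g k = g j) →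
      T.card ≤ a) :
    2 ≤ l + s + a + (ι 0 + ι 1 + ι 2 - 1) := by
  have three : ∀ j : Fin 3, j = 0 ∨ j = 1 ∨ j = 2 := by decide
  have pair : ∀ j k, j ≠ k → ret j → ret k → (g j ≠ g k → 1 ≤ s) ∧
      (g j = g k → ι j = 1 ∨ 1 ≤ a) := by
    intro j k hjk hj hk
    constructor
    · intro hg
      have := hs {j, k} (by simp [hj, hk]) (by
        intro x hx y hy hxy
        simp only [Finset.coe_insert, Finset.coe_singleton, Set.mem_insert_iff,
          Set.mem_singleton_iff] at hx hy
        grind)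
      rw [Finset.card_pair hjk] at this
      omega
    · intro hg
      by_cases h : ι j = 1
      · exact Or.inl h
      · exact Or.inr (ha j hj h {k} (by simpa using hjk) (by simp [hk, hg]))
  have gone1 : ∀ j, ¬ ret j → 1 ≤ l := fun j hj => hl {j} (by simpa using hj)
  have gone2 : ∀ j k, j ≠ k → ¬ ret j → ¬ ret k → 2 ≤ l := fun j k hjk hj hk => by
    have := hl {j, k} (by simp [hj, hk])
    rwa [Finset.card_pair hjk] at this
  have all3 : ret 0 → ret 1 → ret 2 → g 0 ≠ g 1 → g 0 ≠ g 2 → g 1 ≠ g 2 → 2 ≤ s := by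
    intro h0 h1 h2 h01 h02 h12
    have := hs Finset.univ (by intro j _; rcases three j with rfl | rfl | rfl <;> assumption) (by
      intro x _ y _ hxy
      rcases three x with rfl | rfl | rfl <;> rcases three y with rfl | rfl | rfl <;> grind)
    simp at this
    omega
  have same3 : ret 0 → ret 1 → ret 2 → g 0 = g 1 → g 0 = g 2 → ∀ j, ι j = 1 ∨ 2 ≤ a := by
    intro h0 h1 h2 h01 h02 j
    by_cases h : ι j = 1
    · exact Or.inl h
    · have hr : ∀ j, ret j := fun j => by rcases three j with rfl | rfl | rfl <;> assumption
      have hg : ∀ j, g j = g 0 := fun j => by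
        rcases three j with rfl | rfl | rfl
        exacts [rfl, h01.symm, h02.symm]
      have := ha j (hr j) h (Finset.univ.erase j) (by simp)
        (fun k _ => ⟨hr k, by rw [hg k, hg j]⟩)
      rw [Finset.card_erase_of_mem (Finset.mem_univ j)] at this
      exact Or.inr this
  have one_lost : ∀ j k, j ≠ k → ret j → ret k → 1 ≤ l →
      2 ≤ l + s + a + (ι j + ι k - 1) := by
    intro j k hjk hj hk h
    by_cases hg : g j = g k
    · have h1 := (pair j k hjk hj hk).2 hg
      have h2 := (pair k j hjk.symm hk hj).2 hg.symm
      omega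
    · have := (pair j k hjk hj hk).1 hg
      omega
  have one_pair : ∀ j k, j ≠ k → ret j → ret k → g j = g k → 1 ≤ s →
      2 ≤ l + s + a + (ι j + ι k - 1) := by
    intro j k hjk hj hk hg h
    have h1 := (pair j k hjk hj hk).2 hg
    have h2 := (pair k j hjk.symm hk hj).2 hg.symm
    omega
  by_cases h0 : ret 0
  · by_cases h1 : ret 1
    · by_cases h2 : ret 2
      · by_cases h01 : g 0 = g 1
        · by_cases h02 : g 0 = g 2
          · have := same3 h0 h1 h2 h01 h02 0
            have := same3 h0 h1 h2 h01 h02 1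
            have := same3 h0 h1 h2 h01 h02 2
            omega
          · have := one_pair 0 1 (by decide) h0 h1 h01 ((pair 0 2 (by decide) h0 h2).1 h02)
            omega
        · have hs1 := (pair 0 1 (by decide) h0 h1).1 h01
          by_cases h02 : g 0 = g 2
          · have := one_pair 0 2 (by decide) h0 h2 h02 hs1
            omega
          · by_cases h12 : g 1 = g 2
            · have := one_pair 1 2 (by decide) h1 h2 h12 hs1
              omega
            · have := all3 h0 h1 h2 h01 h02 h12
              omega
      · have := one_lost 0 1 (by decide) h0 h1 (gone1 2 h2)
        omega
    · by_cases h2 : ret 2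
      · have := one_lost 0 2 (by decide) h0 h2 (gone1 1 h1)
        omega
      · have := gone2 1 2 (by decide) h1 h2
        omega
  · by_cases h1 : ret 1
    · by_cases h2 : ret 2
      · have := one_lost 1 2 (by decide) h1 h2 (gone1 0 h0)
        omega
      · have := gone2 0 2 (by decide) h0 h2
        omega
    · have := gone2 0 1 (by decide) h0 h1
      omega

/-! ### Basic facts about the construction -/

@[simp]
theorem cycVert_inj {v i w j : ℕ} : cycVert v i = cycVert w j ↔ v = w ∧ i = j := by
  simp [cycVert]

@[simp]
theorem clVert_inj {c c' : ℕ} : clVert c = clVert c' ↔ c = c' := by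
  simp [clVert]

@[simp]
theorem cycVert_ne_clVert {v i c : ℕ} : cycVert v i ≠ clVert c := by
  simp only [cycVert, clVert]; omega

@[simp]
theorem clVert_ne_cycVert {v i c : ℕ} : clVert c ≠ cycVert v i := cycVert_ne_clVert.symm

theorem occIndex_lt_occIndex {F : CNF3} {v c c' : ℕ} (h : OccIn F v c) (hc : c < c') :
    occIndex F v c < occIndex F v c' := by
  classical
  unfold occIndex
  refine Finset.card_lt_card (Finset.ssubset_iff_of_subset ?_ |>.2 ⟨c, ?_, ?_⟩)
  · exact Finset.filter_subset_filter _ (Finset.range_mono hc.le)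
  · simp [h, hc]
  · simp

theorem occIndex_lt_occCount {F : CNF3} {v c : ℕ} (h : OccIn F v c) (hc : c < F.m) :
    occIndex F v c < occCount F v := occIndex_lt_occIndex h hc

theorem occIndex_inj {F : CNF3} {v c c' : ℕ} (h : OccIn F v c) (h' : OccIn F v c')
    (he : occIndex F v c = occIndex F v c') : c = c' := by
  rcases lt_trichotomy c c' with hc | hc | hc
  · have := occIndex_lt_occIndex h hc; omega
  · exact hc
  · have := occIndex_lt_occIndex h' hc; omega

theorem occCount_pos {F : CNF3} {v c : ℕ} (h : OccIn F v c) (hc : c < F.m) : 1 ≤ occCount F v := by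
  have := occIndex_lt_occCount h hc; omega

theorem attachIdx_eq (F : CNF3) (v c : ℕ) :
    attachIdx F v c = 6 * occIndex F v c + 1 ∨ attachIdx F v c = 6 * occIndex F v c + 3 := by
  unfold attachIdx; split_ifs <;> simp

theorem attachIdx_inj {F : CNF3} {v c c' : ℕ} (h : OccIn F v c) (h' : OccIn F v c')
    (he : attachIdx F v c = attachIdx F v c') : c = c' := by
  refine occIndex_inj h h' ?_
  have := attachIdx_eq F v c
  have := attachIdx_eq F v c'
  omega

theorem attachIdx_lt {F : CNF3} {v c : ℕ} (h : OccIn F v c) (hc : c < F.m) :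
    attachIdx F v c < 6 * occCount F v := by
  have := occIndex_lt_occCount h hc
  have := attachIdx_eq F v c
  omega

theorem attachIdx_mod (F : CNF3) (v c : ℕ) :
    attachIdx F v c % 6 = 1 ∨ attachIdx F v c % 6 = 3 := by
  have := attachIdx_eq F v c
  omega

theorem posIn_lit_iff {F : CNF3} {c : ℕ} (hc : c < F.m) (j : Fin 3) :
    PosIn F (F.lit c j).1 c ↔ (F.lit c j).2 = true := by
  constructor
  · rintro ⟨i, hi⟩
    have := F.distinct c hc i j (by rw [hi])
    rw [← this, hi]
  · intro h
    exact ⟨j, Prod.ext rfl h⟩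

theorem occIn_lit (F : CNF3) (c : ℕ) (j : Fin 3) : OccIn F (F.lit c j).1 c := ⟨j, rfl⟩

/-- The variables occurring in `F`. -/
def occVars (F : CNF3) : Finset ℕ :=
  (Finset.range F.m ×ˢ Finset.univ).image fun p : ℕ × Fin 3 => (F.lit p.1 p.2).1

theorem mem_occVars {F : CNF3} {v : ℕ} : v ∈ occVars F ↔ ∃ c < F.m, OccIn F v c := by
  simp [occVars, OccIn]

theorem one_le_occCount {F : CNF3} {v : ℕ} (h : v ∈ occVars F) : 1 ≤ occCount F v := by
  obtain ⟨c, hc, h⟩ := mem_occVars.1 h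
  exact occCount_pos h hc

open Classical in
theorem sum_occVars (F : CNF3) (f : ℕ → ℕ → ℕ) :
    ∑ v ∈ occVars F, ∑ c ∈ Finset.range F.m with OccIn F v c, f v c =
      ∑ c ∈ Finset.range F.m, ∑ j : Fin 3, f (F.lit c j).1 c := by
  rw [Finset.sum_comm' (t' := Finset.range F.m)
    (s' := fun c => Finset.univ.image fun j : Fin 3 => (F.lit c j).1)]
  · refine Finset.sum_congr rfl fun c hc => ?_
    rw [Finset.sum_image]
    intro i _ j _ h
    exact F.distinct c (Finset.mem_range.1 hc) i j h
  · intro v c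
    rw [Finset.mem_filter, mem_occVars, Finset.mem_image, Finset.mem_range]
    simp only [Finset.mem_univ, true_and]
    constructor
    · rintro ⟨-, h, h'⟩; exact ⟨h', h⟩
    · rintro ⟨h', h⟩; exact ⟨⟨c, h, h'⟩, h, h'⟩

theorem sum_occCount (F : CNF3) : ∑ v ∈ occVars F, occCount F v = 3 * F.m := by
  classical
  have := sum_occVars F fun _ _ => 1
  simp only [Finset.sum_const, smul_eq_mul, mul_one, Finset.card_univ, Fintype.card_fin,
    Finset.card_range] at this
  rw [mul_comm, ← this]
  rfl

/-- The vertex at position `i` (from `0`, cyclically) of the cycle of the variable `v`. -/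
noncomputable def cyclePt (F : CNF3) (v i : ℕ) : ℕ := cycVert v (i % (6 * occCount F v) + 1)

theorem cyclePt_add_length (F : CNF3) (v i : ℕ) :
    cyclePt F v (i + 6 * occCount F v) = cyclePt F v i := by
  simp [cyclePt]

theorem cyclePt_of_lt {F : CNF3} {v i : ℕ} (h : i < 6 * occCount F v) :
    cyclePt F v i = cycVert v (i + 1) := by
  rw [cyclePt, Nat.mod_eq_of_lt h]

theorem cyclePt_eq_iff {F : CNF3} {v w i j : ℕ} : cyclePt F v i = cyclePt F w j ↔
    v = w ∧ i % (6 * occCount F v) = j % (6 * occCount F v) := by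
  simp only [cyclePt, cycVert_inj]
  constructor
  · rintro ⟨rfl, h⟩; exact ⟨rfl, by omega⟩
  · rintro ⟨rfl, h⟩; exact ⟨rfl, by omega⟩

theorem cyclePt_mem_A {F : CNF3} {v i : ℕ} (hd : 1 ≤ occCount F v) (hi : i % 2 = 1) :
    cyclePt F v i ∈ AsetF F := by
  have h1 := Nat.mod_lt i (show 6 * occCount F v > 0 by omega)
  have h2 : i % (6 * occCount F v) % 2 = i % 2 := Nat.mod_mod_of_dvd _ ⟨3 * occCount F v, by ring⟩
  exact ⟨v, _, by omega, by omega, by omega, rfl⟩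

theorem cyclePt_mem_B {F : CNF3} {v i : ℕ} (hd : 1 ≤ occCount F v) (hi : i % 2 = 0) :
    cyclePt F v i ∈ BsetF F := by
  have h1 := Nat.mod_lt i (show 6 * occCount F v > 0 by omega)
  have h2 : i % (6 * occCount F v) % 2 = i % 2 := Nat.mod_mod_of_dvd _ ⟨3 * occCount F v, by ring⟩
  exact Or.inr ⟨v, _, by omega, by omega, by omega, rfl⟩

theorem clVert_mem_B {F : CNF3} {c : ℕ} (hc : c < F.m) : clVert c ∈ BsetF F := Or.inl ⟨c, hc, rfl⟩

theorem disjoint_AsetF_BsetF (F : CNF3) : Disjoint (AsetF F) (BsetF F) := by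
  rw [Set.disjoint_left]
  rintro x ⟨v, i, -, -, hi, rfl⟩ (⟨c, -, h⟩ | ⟨w, j, -, -, hj, h⟩)
  · exact cycVert_ne_clVert h
  · rw [cycVert_inj] at h; omega

theorem cyclePt_attach {F : CNF3} {v c : ℕ} (h : OccIn F v c) (hc : c < F.m) :
    cyclePt F v (attachIdx F v c - 1) = cycVert v (attachIdx F v c) := by
  have := attachIdx_lt h hc
  have := attachIdx_mod F v c
  rw [cyclePt_of_lt (by omega), Nat.sub_add_cancel (by omega)]

theorem adjF0_cyclePt {F : CNF3} {v : ℕ} (hd : 1 ≤ occCount F v) (i : ℕ) :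
    AdjF0 F (cyclePt F v i) (cyclePt F v (i + 1)) := by
  have h1 := Nat.mod_lt i (show 6 * occCount F v > 0 by omega)
  refine Or.inl ⟨v, _, by omega, by omega, rfl, ?_⟩
  simp only [cyclePt, Nat.mod_add_mod]

theorem adjF0_clause {F : CNF3} {v c : ℕ} (h : OccIn F v c) (hc : c < F.m) :
    AdjF0 F (clVert c) (cycVert v (attachIdx F v c)) := Or.inr ⟨c, hc, v, h, rfl, rfl⟩

theorem adjF0_asymm {F : CNF3} {x y : ℕ} (h : AdjF0 F x y) : ¬ AdjF0 F y x := by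
  rcases h with ⟨v, i, hi, hi', rfl, rfl⟩ | ⟨c, hc, v, hv, rfl, rfl⟩
  · rintro (⟨w, j, hj, hj', h1, h2⟩ | ⟨c, hc, w, hw, h1, h2⟩)
    · simp only [cycVert_inj] at h1 h2
      obtain ⟨rfl, h1⟩ := h1
      obtain ⟨-, h2⟩ := h2
      rcases hi'.lt_or_eq with h | h
      · rw [Nat.mod_eq_of_lt h] at h1
        rcases hj'.lt_or_eq with h' | h'
        · rw [Nat.mod_eq_of_lt h'] at h2; omega
        · rw [h', Nat.mod_self] at h2; omega
      · rw [h, Nat.mod_self] at h1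
        rw [← h1, Nat.mod_eq_of_lt (by omega)] at h2
        omega
    · exact cycVert_ne_clVert h1
  · rintro (⟨w, j, hj, hj', h1, h2⟩ | ⟨c', hc', w, hw, h1, h2⟩)
    · exact clVert_ne_cycVert h2
    · exact cycVert_ne_clVert h1

theorem adjF0_left_mem {F : CNF3} {x y : ℕ} (h : AdjF0 F x y) : x ∈ AsetF F ∪ BsetF F := by
  rcases h with ⟨v, i, hi, hi', rfl, rfl⟩ | ⟨c, hc, v, hv, rfl, rfl⟩
  · rcases Nat.mod_two_eq_zero_or_one i with h | h
    · exact Or.inl ⟨v, i, hi, hi', h, rfl⟩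
    · exact Or.inr (Or.inr ⟨v, i, hi, hi', h, rfl⟩)
  · exact Or.inr (clVert_mem_B hc)

theorem adjF0_right_mem {F : CNF3} {x y : ℕ} (h : AdjF0 F x y) : y ∈ AsetF F ∪ BsetF F := by
  rcases h with ⟨v, i, hi, hi', rfl, rfl⟩ | ⟨c, hc, v, hv, rfl, rfl⟩
  · have hd : 1 ≤ occCount F v := by omega
    rcases Nat.mod_two_eq_zero_or_one i with h | h
    · exact Or.inr (cyclePt_mem_B hd h)
    · exact Or.inl (cyclePt_mem_A hd h)
  · rw [← cyclePt_attach hv hc]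
    have := attachIdx_mod F v c
    exact Or.inr (cyclePt_mem_B (occCount_pos hv hc) (by omega))

theorem IsGF.adj_mem {F : CNF3} {G : BGraph} (hG : IsGF F G) {x y : ℕ} (h : G.Adj x y) :
    x ∈ verts G := by
  rw [verts, hG.1, hG.2.1]
  exact ((hG.2.2 x y).1 h).elim adjF0_left_mem adjF0_right_mem

theorem adjF_cycVert_cycVert {F : CNF3} {v w i j : ℕ} (h : AdjF F (cycVert v i) (cycVert w j)) :
    v = w ∧ (j = i % (6 * occCount F v) + 1 ∨ i = j % (6 * occCount F v) + 1) := by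
  rcases h with (⟨u, k, -, -, h1, h2⟩ | ⟨c, -, u, -, h1, h2⟩) |
    (⟨u, k, -, -, h1, h2⟩ | ⟨c, -, u, -, h1, h2⟩)
  · grind [cycVert_inj]
  · exact absurd h1 cycVert_ne_clVert
  · grind [cycVert_inj]
  · exact absurd h1 cycVert_ne_clVert

theorem adjF_clVert {F : CNF3} {c y : ℕ} (h : AdjF F (clVert c) y) :
    ∃ v, OccIn F v c ∧ c < F.m ∧ y = cycVert v (attachIdx F v c) := by
  rcases h with (⟨u, k, -, -, h1, h2⟩ | ⟨c', hc, u, hu, h1, h2⟩) |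
    (⟨u, k, -, -, h1, h2⟩ | ⟨c', hc, u, hu, h1, h2⟩)
  · exact absurd h1 clVert_ne_cycVert
  · rw [clVert_inj] at h1
    subst h1
    exact ⟨u, hu, hc, h2⟩
  · exact absurd h2 clVert_ne_cycVert
  · exact absurd h2 clVert_ne_cycVert

/-! ### The cost of a trace on a single cycle -/

theorem sum_card_filter_le {α τ : Type*} (X : Finset α) (T : Finset τ) (P : τ → α → Prop)
    [∀ t, DecidablePred (P t)]
    (hu : ∀ t ∈ T, ∀ t' ∈ T, ∀ x ∈ X, P t x → P t' x → t = t') :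
    ∑ t ∈ T, (X.filter (P t)).card ≤ X.card := by
  classical
  rw [← Finset.card_biUnion]
  · refine Finset.card_le_card fun x hx => ?_
    obtain ⟨t, -, hx⟩ := Finset.mem_biUnion.1 hx
    exact (Finset.mem_filter.1 hx).1
  · intro t ht t' ht' hne
    rw [Function.onFun, Finset.disjoint_left]
    intro x hx hx'
    rw [Finset.mem_filter] at hx hx'
    exact hne (hu t ht t' ht' x hx.1 hx.2 hx'.2)

theorem sum_indicator_mem_le {α τ : Type*} [DecidableEq α] (X : Finset α) (P : α → Prop)
    [DecidablePred P] (T : Finset τ) (f : τ → α) (hf : Set.InjOn f T)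
    (hP : ∀ t ∈ T, P (f t)) :
    ∑ t ∈ T, (if f t ∈ X then 1 else 0) ≤ (X.filter P).card := by
  rw [← Finset.card_filter]
  refine Finset.card_le_card_of_injOn f ?_ (hf.mono fun t ht => ?_)
  swap
  · exact (Finset.mem_filter.1 (Finset.mem_coe.1 ht)).1
  intro t ht
  simp only [Finset.coe_filter, Set.mem_ofPred_eq] at ht ⊢
  exact ⟨ht.2, hP t ht.1⟩

theorem eq_of_add_mod_eq {n i k l : ℕ} (h : (i + k) % n = (i + l) % n) (hk : k < n) (hl : l < n) :
    k = l := by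
  have := Nat.ModEq.add_left_cancel' i h
  rwa [Nat.ModEq, Nat.mod_eq_of_lt hk, Nat.mod_eq_of_lt hl] at this

section Trace

variable {F : CNF3} {G G' : BGraph} (t : EditTrace (AdjF0 F) G G')

open Classical in
/-- The number of additional copies of the vertex `x`. -/
noncomputable def EditTrace.splits (x : ℕ) : ℕ := (t.extra.filter fun y => t.π y = x).card

theorem EditTrace.card_copies_le {x : ℕ} {T : Finset ℕ}
    (hT : ∀ y ∈ T, y ∈ verts G' ∧ t.π y = x) : T.card ≤ t.splits x + 1 := by
  classical
  refine le_trans (Finset.card_le_card fun y hy => ?_) (Finset.card_insert_le x _)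
  obtain ⟨h1, h2⟩ := hT y hy
  rw [Finset.mem_insert, Finset.mem_filter]
  rcases (t.verts_iff y).1 h1 with h | h
  · rw [t.π_base y h] at h2; exact Or.inl h2
  · exact Or.inr ⟨h, h2⟩

theorem EditTrace.one_le_splits {x y z : ℕ} (hy : y ∈ verts G') (hz : z ∈ verts G')
    (hyx : t.π y = x) (hzx : t.π z = x) (hne : y ≠ z) : 1 ≤ t.splits x := by
  have := t.card_copies_le (x := x) (T := {y, z}) (by simp [*])
  rw [Finset.card_pair hne] at this
  omega

theorem EditTrace.adj_mem_right (t : EditTrace (AdjF0 F) G G') {x y : ℕ}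
    (h : G'.Adj x y) : y ∈ verts G' :=
  t.adj_mem y x (G'.symm _ _ h)

/-- The copy `y` of the vertex at position `j + 1` has a neighbour on the cycle of `v`. -/
def EditTrace.Linked (v j y : ℕ) : Prop :=
  ∃ z, G'.Adj y z ∧ (t.π z = cyclePt F v j ∨ t.π z = cyclePt F v (j + 2))

/-- Some copy of the vertex at position `j + 1` of the cycle of `v` has no neighbour on that
cycle. -/
def EditTrace.Isolated (v j : ℕ) : Prop :=
  ∃ y ∈ verts G', t.π y = cyclePt F v (j + 1) ∧ ¬ t.Linked v j y

theorem EditTrace.linked_add_length (v j y : ℕ) :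
    t.Linked v (j + 6 * occCount F v) y ↔ t.Linked v j y := by
  unfold EditTrace.Linked
  rw [cyclePt_add_length, add_right_comm, cyclePt_add_length]

theorem EditTrace.isolated_add_length (v j : ℕ) :
    t.Isolated v (j + 6 * occCount F v) ↔ t.Isolated v j := by
  unfold EditTrace.Isolated
  simp only [t.linked_add_length]
  rw [add_right_comm, cyclePt_add_length]

theorem EditTrace.isolated_mod (v j : ℕ) :
    t.Isolated v (j % (6 * occCount F v)) ↔ t.Isolated v j :=
  Iff.of_eq (Function.Periodic.map_mod_nat (f := t.Isolated v)
    (fun j => propext (t.isolated_add_length v j)) j)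

/-- The attachment vertex of the clause `c` on the cycle of `v` has a copy without neighbours on
that cycle. -/
def EditTrace.ClauseIsolated (v c : ℕ) : Prop :=
  t.Isolated v (attachIdx F v c + 6 * occCount F v - 2)

open Classical in
/-- The operations of the trace charged to the cycle of `v`. -/
noncomputable def EditTrace.cycleCost (v : ℕ) : ℕ :=
  (t.lost.filter fun p => ∃ i j, p = (cycVert v i, cycVert v j)).card +
  (t.extra.filter fun y => ∃ i, t.π y = cycVert v i).card +
  (t.gained.filter fun p => ∃ i j, p = (cycVert v i, cycVert v j)).card

theorem not_adjF_cyclePt_add_three {v : ℕ} (hd : 1 ≤ occCount F v) (i : ℕ) :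
    ¬ AdjF F (cyclePt F v i) (cyclePt F v (i + 3)) := by
  intro h
  obtain ⟨-, h | h⟩ := adjF_cycVert_cycVert h
  · rw [Nat.mod_add_mod, Nat.add_right_cancel_iff] at h
    have := eq_of_add_mod_eq h (by omega) (by omega)
    omega
  · rw [Nat.mod_add_mod, Nat.add_right_cancel_iff] at h
    have := eq_of_add_mod_eq (i := i) (k := 0) (l := 4) h (by omega) (by omega)
    omega

theorem cyclePt_injOn (F : CNF3) (v : ℕ) :
    Set.InjOn (cyclePt F v) (Finset.range (6 * occCount F v)) := by
  intro i hi j hj h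
  simp only [Finset.coe_range, Set.mem_Iio] at hi hj
  have := (cyclePt_eq_iff.1 h).2
  rwa [Nat.mod_eq_of_lt hi, Nat.mod_eq_of_lt hj] at this

open Classical in
theorem EditTrace.sum_clauseIsolated_le (v : ℕ) :
    ∑ c ∈ Finset.range F.m with OccIn F v c, (if t.ClauseIsolated v c then 1 else 0) ≤
      ∑ j ∈ Finset.range (6 * occCount F v), (if (∃ c < F.m, OccIn F v c ∧
        attachIdx F v c = (j + 1) % (6 * occCount F v) + 1) ∧ t.Isolated v j then 1 else 0) := by
  set d := occCount F v with hd'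
  rw [← Finset.card_filter, ← Finset.card_filter]
  refine Finset.card_le_card_of_injOn (fun c => (attachIdx F v c + 6 * d - 2) % (6 * d)) ?_ ?_
  · intro c hc
    simp only [Finset.coe_filter, Finset.mem_filter, Set.mem_ofPred_eq, Finset.mem_range] at hc ⊢
    obtain ⟨⟨hc, hocc⟩, hiso⟩ := hc
    have h1 := attachIdx_lt hocc hc
    have h2 := attachIdx_mod F v c
    refine ⟨Nat.mod_lt _ (by omega), ⟨c, hc, hocc, ?_⟩, (t.isolated_mod v _).2 hiso⟩
    rw [Nat.mod_add_mod, show attachIdx F v c + 6 * d - 2 + 1 = attachIdx F v c - 1 + 6 * d by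
      omega, Nat.add_mod_right, Nat.mod_eq_of_lt (by omega)]
    omega
  · intro c hc c' hc' h
    simp only [Finset.coe_filter, Finset.mem_filter, Set.mem_ofPred_eq, Finset.mem_range] at hc hc'
    obtain ⟨⟨hc, hocc⟩, -⟩ := hc
    obtain ⟨⟨hc', hocc'⟩, -⟩ := hc'
    have h1 := attachIdx_lt hocc hc
    have h2 := attachIdx_mod F v c
    have h1' := attachIdx_lt hocc' hc'
    have h2' := attachIdx_mod F v c'
    refine attachIdx_inj hocc hocc' ?_
    simp only at h
    rw [show attachIdx F v c + 6 * d - 2 = 6 * d - 2 + attachIdx F v c by omega,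
      show attachIdx F v c' + 6 * d - 2 = 6 * d - 2 + attachIdx F v c' by omega] at h
    exact eq_of_add_mod_eq h h1 h1'

open Classical in
theorem EditTrace.sum_lost_le (v : ℕ) : ∑ i ∈ Finset.range (6 * occCount F v),
      (if (cyclePt F v i, cyclePt F v (i + 1)) ∈ t.lost then 1 else 0) ≤
    (t.lost.filter fun p => ∃ i j, p = (cycVert v i, cycVert v j)).card :=
  sum_indicator_mem_le t.lost (fun p => ∃ i j, p = (cycVert v i, cycVert v j))
    (Finset.range (6 * occCount F v)) (fun i => (cyclePt F v i, cyclePt F v (i + 1)))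
    (fun _ hi _ hj h => cyclePt_injOn F v hi hj (Prod.ext_iff.1 h).1) fun _ _ => ⟨_, _, rfl⟩

open Classical in
theorem EditTrace.sum_splits_le (v : ℕ) :
    ∑ i ∈ Finset.range (6 * occCount F v), t.splits (cyclePt F v i) ≤
      (t.extra.filter fun y => ∃ i, t.π y = cycVert v i).card := by
  refine le_trans (le_of_eq ?_) (sum_card_filter_le
    (t.extra.filter fun y => ∃ i, t.π y = cycVert v i) (Finset.range (6 * occCount F v))
    (fun i y => t.π y = cyclePt F v i)
    fun i hi j hj y _ h1 h2 => cyclePt_injOn F v hi hj (h1.symm.trans h2))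
  refine Finset.sum_congr rfl fun i _ => ?_
  rw [Finset.filter_filter, EditTrace.splits]
  congr 1
  refine Finset.filter_congr fun y _ => ⟨fun h => ⟨⟨_, h⟩, h⟩, fun h => h.2⟩

open Classical in
theorem EditTrace.sum_gained_le (v : ℕ) : ∑ i ∈ Finset.range (6 * occCount F v),
      (if (cyclePt F v i, cyclePt F v (i + 3)) ∈ t.gained ∨
        (cyclePt F v (i + 3), cyclePt F v i) ∈ t.gained then 1 else 0) ≤
    2 * (t.gained.filter fun p => ∃ i j, p = (cycVert v i, cycVert v j)).card := by
  have h1 := sum_indicator_mem_le t.gained (fun p => ∃ i j, p = (cycVert v i, cycVert v j))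
    (Finset.range (6 * occCount F v)) (fun i => (cyclePt F v i, cyclePt F v (i + 3)))
    (fun i hi j hj h => cyclePt_injOn F v hi hj (Prod.ext_iff.1 h).1) fun i _ => ⟨_, _, rfl⟩
  have h2 := sum_indicator_mem_le t.gained (fun p => ∃ i j, p = (cycVert v i, cycVert v j))
    (Finset.range (6 * occCount F v)) (fun i => (cyclePt F v (i + 3), cyclePt F v i))
    (fun i hi j hj h => cyclePt_injOn F v hi hj (Prod.ext_iff.1 h).2) fun i _ => ⟨_, _, rfl⟩
  refine le_trans ?_ ((add_le_add h1 h2).trans_eq (two_mul _).symm)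
  rw [← Finset.sum_add_distrib]
  refine Finset.sum_le_sum fun i _ => ?_
  split_ifs <;> first | omega | tauto

open Classical in
theorem EditTrace.cycle_bound (hG : IsGF F G) (hbi : IsBicliqueUnion G') {v : ℕ}
    (hd : 1 ≤ occCount F v) :
    6 * occCount F v + 2 * ∑ c ∈ Finset.range F.m with OccIn F v c,
        (if t.ClauseIsolated v c then 1 else 0) ≤ 3 * t.cycleCost v ∧
    (3 * t.cycleCost v ≤ 6 * occCount F v + 2 * ∑ c ∈ Finset.range F.m with OccIn F v c,
        (if t.ClauseIsolated v c then 1 else 0) →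
      (∀ i, t.splits (cyclePt F v i) = 0) ∧
      (∀ c < F.m, OccIn F v c → ¬ t.ClauseIsolated v c) ∧
      ∀ i, (if (cyclePt F v i, cyclePt F v (i + 1)) ∈ t.lost then 1 else 0) +
        (if (cyclePt F v (i + 1), cyclePt F v (i + 2)) ∈ t.lost then 1 else 0) +
        (if (cyclePt F v (i + 2), cyclePt F v (i + 3)) ∈ t.lost then 1 else 0) = 1) := by
  set d := occCount F v with hd'
  let x : ℕ → ℕ := cyclePt F v
  have px : ∀ i, x (i + 6 * d) = x i := cyclePt_add_length F v
  have px' : ∀ i k, x (i + 6 * d + k) = x (i + k) := fun i k => by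
    rw [add_right_comm, px]
  have hrep : ∀ i, (x i, x (i + 1)) ∉ t.lost →
      ∃ y z, t.π y = x i ∧ t.π z = x (i + 1) ∧ G'.Adj y z :=
    fun i => t.rep _ _ (adjF0_cyclePt hd i)
  let att : ℕ → Prop := fun j => ∃ c < F.m, OccIn F v c ∧ attachIdx F v c = (j + 1) % (6 * d) + 1
  let δ : ℕ → ℕ := fun i => if (x i, x (i + 1)) ∈ t.lost then 1 else 0
  let ε : ℕ → ℕ := fun j => if ∃ y z, y ≠ z ∧ t.π y = x (j + 1) ∧ t.π z = x (j + 1) ∧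
    t.Linked v j y ∧ t.Linked v j z then 1 else 0
  let ι : ℕ → ℕ := fun j => if att j ∧ t.Isolated v j then 1 else 0
  let α : ℕ → ℕ := fun i => if (x i, x (i + 3)) ∈ t.gained ∨ (x (i + 3), x i) ∈ t.gained then 1
    else 0
  have pL : ∀ j y, t.Linked v (j + 6 * d) y ↔ t.Linked v j y := t.linked_add_length v
  have pI : ∀ j, t.Isolated v (j + 6 * d) ↔ t.Isolated v j := t.isolated_add_length v
  have linked_mem : ∀ {j y}, t.Linked v j y → y ∈ verts G' := by
    rintro j y ⟨z, hz, -⟩; exact t.adj_mem _ _ hz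
  have hsum := t.sum_clauseIsolated_le v
  have hδsum := t.sum_lost_le v
  have hssum := t.sum_splits_le v
  have hαsum := t.sum_gained_le v
  rw [← hd'] at hsum hδsum hssum hαsum
  change _ ≤ ∑ j ∈ Finset.range (6 * d), ι j at hsum
  change ∑ i ∈ Finset.range (6 * d), δ i ≤ _ at hδsum
  change ∑ i ∈ Finset.range (6 * d), t.splits (x i) ≤ _ at hssum
  change ∑ i ∈ Finset.range (6 * d), α i ≤ _ at hαsum
  have key := cycle_count (d := d) hd (δ := δ) (ε := ε) (ι := ι) (α := α)
    (s := fun i => t.splits (x i)) (fun i => by simp only [δ]; split_ifs <;> simp)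
    (fun i => by simp only [ε]; split_ifs <;> simp) (fun i => by simp only [ι]; split_ifs <;> simp)
    (fun i => by simp only [δ, px, px'])
    (fun j => by simp only [ε, px', pL])
    (fun j => by
      simp only [ι, att, pI]
      rw [add_right_comm, Nat.add_mod_right])
    (fun i => by simp only [px])
    (by
      intro j hj
      simp only [ι] at hj
      split_ifs at hj with h
      · obtain ⟨⟨c, hc, hocc, h⟩, -⟩ := h
        have := attachIdx_mod F v c
        have : (j + 1) % (6 * d) % 6 = (j + 1) % 6 := Nat.mod_mod_of_dvd _ ⟨d, rfl⟩
        omega)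
    (by
      intro i
      by_contra hcon
      have hδ0 : δ i = 0 ∧ δ (i + 1) = 0 ∧ δ (i + 2) = 0 ∧ ε i = 0 ∧ ε (i + 1) = 0 ∧ α i = 0 := by
        omega
      obtain ⟨h1, h2, h3, h4, h5, h6⟩ := hδ0
      simp only [δ, ε, α, ite_eq_right_iff, one_ne_zero, imp_false, add_assoc, Nat.reduceAdd]
        at h1 h2 h3 h4 h5 h6
      obtain ⟨y0, y1, hy0, hy1, a1⟩ := hrep i h1
      obtain ⟨z1, z2, hz1, hz2, a2⟩ := hrep (i + 1) h2
      obtain ⟨w2, w3, hw2, hw3, a3⟩ := hrep (i + 2) h3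
      have e1 : y1 = z1 := by
        by_contra hne
        exact h4 ⟨y1, z1, hne, hy1, hz1, ⟨y0, G'.symm _ _ a1, Or.inl hy0⟩, ⟨z2, a2, Or.inr hz2⟩⟩
      have e2 : z2 = w2 := by
        by_contra hne
        exact h5 ⟨z2, w2, hne, hz2, hw2, ⟨z1, G'.symm _ _ a2, Or.inl hz1⟩, ⟨w3, a3, Or.inr hw3⟩⟩
      subst e1 e2
      have := t.proj _ _ (hbi _ _ _ _ a1 a2 a3)
      rw [hy0, hw3] at this
      rcases this with h | h
      · exact not_adjF_cyclePt_add_three hd i ((hG.2.2 _ _).1 h)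
      · exact h6 h)
    (by
      intro j hj
      simp only [ε] at hj
      split_ifs at hj with h
      · obtain ⟨y, z, hne, hy, hz, ly, lz⟩ := h
        exact t.one_le_splits (linked_mem ly) (linked_mem lz) hy hz hne)
    (by
      intro j hj hj'
      simp only [ε] at hj
      simp only [ι] at hj'
      split_ifs at hj with h
      · split_ifs at hj' with h'
        · obtain ⟨y, z, hne, hy, hz, ly, lz⟩ := h
          obtain ⟨-, w, hw, hwx, lw⟩ := h'
          have hyw : y ≠ w := by rintro rfl; exact lw ly
          have hzw : z ≠ w := by rintro rfl; exact lw lz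
          have := t.card_copies_le (x := x (j + 1)) (T := {y, z, w})
            (by
              intro u hu
              simp only [Finset.mem_insert, Finset.mem_singleton] at hu
              rcases hu with rfl | rfl | rfl
              exacts [⟨linked_mem ly, hy⟩, ⟨linked_mem lz, hz⟩, ⟨hw, hwx⟩])
          rw [Finset.card_eq_three.2 ⟨y, z, w, hne, hyw, hzw, rfl⟩] at this
          omega)
    (by
      intro j hj hj'
      simp only [ι] at hj
      split_ifs at hj with h
      · obtain ⟨-, w, hw, hwx, lw⟩ := h
        obtain ⟨y, hy, ly⟩ : ∃ y, t.π y = x (j + 1) ∧ t.Linked v j y := by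
          simp only [δ, ite_eq_right_iff, one_ne_zero, imp_false] at hj'
          rcases hj' with h | h
          · obtain ⟨y, z, hy, hz, a⟩ := hrep j h
            exact ⟨z, hz, y, G'.symm _ _ a, Or.inl hy⟩
          · obtain ⟨y, z, hy, hz, a⟩ := hrep (j + 1) h
            exact ⟨y, hy, z, a, Or.inr hz⟩
        exact t.one_le_splits (linked_mem ly) hw hy hwx (by rintro rfl; exact lw ly))
    hαsum
  have hcost : ∑ i ∈ Finset.range (6 * d), δ i + ∑ i ∈ Finset.range (6 * d), t.splits (x i) +
      (t.gained.filter fun p => ∃ i j, p = (cycVert v i, cycVert v j)).card ≤ t.cycleCost v := by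
    unfold EditTrace.cycleCost; omega
  refine ⟨by omega, fun hle => ?_⟩
  obtain ⟨k1, k2, k3⟩ := key.2 (by omega)
  refine ⟨k1, fun c hc hocc hiso => ?_, k3⟩
  have hzero : ∑ j ∈ Finset.range (6 * d), ι j = 0 := Finset.sum_eq_zero fun j _ => k2 j
  rw [hzero] at hsum
  have := Finset.sum_eq_zero_iff.1 (Nat.le_zero.1 hsum) c (by simp [hc, hocc])
  simp [hiso] at this

end Trace

/-! ### The cost of a trace at a clause vertex, and the resulting assignment -/

theorem sum_card_filter_add_le {α τ : Type*} (X : Finset α) (S T : Finset τ) (P Q : τ → α → Prop)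
    [∀ t, DecidablePred (P t)] [∀ t, DecidablePred (Q t)]
    (hP : ∀ s s', ∀ x ∈ X, P s x → P s' x → s = s')
    (hQ : ∀ t t', ∀ x ∈ X, Q t x → Q t' x → t = t')
    (hPQ : ∀ s t, ∀ x ∈ X, P s x → ¬ Q t x) :
    ∑ s ∈ S, (X.filter (P s)).card + ∑ t ∈ T, (X.filter (Q t)).card ≤ X.card := by
  classical
  have h := sum_card_filter_le X (S.disjSum T) (Sum.elim P Q) ?_
  · rw [Finset.sum_disjSum] at h
    convert h <;> exact Iff.rfl
  · rintro (s | s) - (t | t) - x hx h1 h2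
    · exact congrArg _ (hP s t x hx h1 h2)
    · exact absurd h2 (hPQ s t x hx h1)
    · exact absurd h1 (hPQ t s x hx h2)
    · exact congrArg _ (hQ s t x hx h1 h2)

section Trace

variable {F : CNF3} {G G' : BGraph} (t : EditTrace (AdjF0 F) G G')

open Classical in
/-- The operations of the trace charged to the clause `c`. -/
noncomputable def EditTrace.clauseCost (c : ℕ) : ℕ :=
  (t.lost.filter fun p => p.1 = clVert c).card + t.splits (clVert c) +
  (t.gained.filter fun p => ∃ u v i, u ≠ v ∧ OccIn F v c ∧
    p = (cycVert u i, cycVert v (attachIdx F v c))).card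

theorem EditTrace.sum_cycleCost_add_sum_clauseCost_le (S T : Finset ℕ) :
    ∑ v ∈ S, t.cycleCost v + ∑ c ∈ T, t.clauseCost c ≤ t.cost := by
  classical
  have h1 := sum_card_filter_add_le t.lost S T
    (fun v p => ∃ i j, p = (cycVert v i, cycVert v j)) (fun c p => p.1 = clVert c)
    (by rintro v w p - ⟨i, j, rfl⟩ ⟨k, l, h⟩; simp at h; exact h.1.1)
    (by rintro c c' p - h h'; simpa using h.symm.trans h')
    (by rintro v c p - ⟨i, j, rfl⟩; simp)
  have h2 := sum_card_filter_add_le t.extra S T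
    (fun v y => ∃ i, t.π y = cycVert v i) (fun c y => t.π y = clVert c)
    (by rintro v w p - ⟨i, h⟩ ⟨k, h'⟩; exact (cycVert_inj.1 (h.symm.trans h')).1)
    (by rintro c c' p - h h'; simpa using h.symm.trans h')
    (by rintro v c p - ⟨i, h⟩; simp [h])
  have h3 := sum_card_filter_add_le t.gained S T
    (fun v p => ∃ i j, p = (cycVert v i, cycVert v j))
    (fun c p => ∃ u v i, u ≠ v ∧ OccIn F v c ∧ p = (cycVert u i, cycVert v (attachIdx F v c)))
    (by rintro v w p - ⟨i, j, rfl⟩ ⟨k, l, h⟩; simp at h; exact h.1.1)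
    (by
      rintro c c' p - ⟨u, v, i, -, hv, rfl⟩ ⟨u', v', i', -, hv', h⟩
      simp only [Prod.mk.injEq, cycVert_inj] at h
      obtain ⟨-, rfl, h⟩ := h
      exact attachIdx_inj hv hv' h)
    (by
      rintro w c p - ⟨i, j, rfl⟩ ⟨u, v, k, hne, -, h⟩
      simp only [Prod.mk.injEq, cycVert_inj] at h
      exact hne (h.1.1.symm.trans h.2.1))
  unfold EditTrace.cycleCost EditTrace.clauseCost EditTrace.cost EditTrace.splits
  simp only [Finset.sum_add_distrib] at *
  omega

open Classical in
theorem EditTrace.clause_bound (hG : IsGF F G) (hbi : IsBicliqueUnion G') {c : ℕ} (hc : c < F.m) :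
    2 ≤ t.clauseCost c +
      ((∑ j : Fin 3, if t.ClauseIsolated (F.lit c j).1 c then 1 else 0) - 1) := by
  let v : Fin 3 → ℕ := fun j => (F.lit c j).1
  let w : Fin 3 → ℕ := fun j => cycVert (v j) (attachIdx F (v j) c)
  have hw : Function.Injective w := fun i j h => F.distinct c hc i j (cycVert_inj.1 h).1
  have hrep : ∀ j, ∃ x y, (clVert c, w j) ∉ t.lost →
      t.π x = clVert c ∧ t.π y = w j ∧ G'.Adj x y := by
    intro j
    by_cases h : (clVert c, w j) ∉ t.lost
    · obtain ⟨x, y, h⟩ := t.rep _ _ (adjF0_clause (occIn_lit F c j) hc) h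
      exact ⟨x, y, fun _ => h⟩
    · exact ⟨0, 0, fun h' => absurd h' h⟩
  choose g y hgy using hrep
  have key := clause_count (ret := fun j => (clVert c, w j) ∉ t.lost) (g := g)
    (ι := fun j => if t.ClauseIsolated (v j) c then 1 else 0)
    (l := (t.lost.filter fun p => p.1 = clVert c).card) (s := t.splits (clVert c))
    (a := (t.gained.filter fun p => ∃ u v i, u ≠ v ∧ OccIn F v c ∧
      p = (cycVert u i, cycVert v (attachIdx F v c))).card)
    (by
      intro T hT
      refine Finset.card_le_card_of_injOn (fun j => (clVert c, w j)) (fun j hj => ?_)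
        (fun i _ j _ h => hw (Prod.ext_iff.1 h).2)
      simpa using hT j hj)
    (by
      intro T hT hinj
      rw [← Finset.card_image_of_injOn hinj]
      refine t.card_copies_le fun x hx => ?_
      obtain ⟨j, hj, rfl⟩ := Finset.mem_image.1 hx
      obtain ⟨h1, -, h2⟩ := hgy j (hT j hj)
      exact ⟨t.adj_mem _ _ h2, h1⟩)
    (by
      intro j hj hι T hjT hT
      obtain ⟨h1, h2, h3⟩ := hgy j hj
      have hocc : OccIn F (v j) c := occIn_lit F c j
      have hd := occCount_pos hocc hc
      have hm := attachIdx_mod F (v j) c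
      have hiso : ¬ t.ClauseIsolated (v j) c := by
        intro h; simp [h] at hι
      have hlink : t.Linked (v j) (attachIdx F (v j) c + 6 * occCount F (v j) - 2) (y j) := by
        by_contra hnot
        refine hiso ⟨y j, t.adj_mem_right h3, ?_, hnot⟩
        rw [h2, show attachIdx F (v j) c + 6 * occCount F (v j) - 2 + 1 =
          attachIdx F (v j) c - 1 + 6 * occCount F (v j) by omega, cyclePt_add_length,
          cyclePt_attach hocc hc]
      obtain ⟨z, hz, hπ⟩ := hlink
      obtain ⟨i, hi⟩ : ∃ i, t.π z = cycVert (v j) i := by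
        rcases hπ with h | h <;> exact ⟨_, h⟩
      refine Finset.card_le_card_of_injOn (fun k => (t.π z, w k)) (fun k hk => ?_)
        (fun i _ j _ h => hw (Prod.ext_iff.1 h).2)
      obtain ⟨hk', hgk⟩ := hT k hk
      obtain ⟨k1, k2, k3⟩ := hgy k hk'
      have hne : v j ≠ v k := fun h => hjT (by rwa [F.distinct c hc j k h])
      have hocck : OccIn F (v k) c := occIn_lit F c k
      have hadj : G'.Adj z (y k) := hbi _ _ _ _ (G'.symm _ _ hz) (G'.symm _ _ h3) (hgk ▸ k3)
      simp only [Finset.coe_filter, Set.mem_ofPred_eq]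
      refine ⟨?_, v j, v k, i, hne, hocck, by rw [hi]⟩
      rcases t.proj _ _ hadj with h | h | h
      · rw [hi, k2] at h
        exact absurd (adjF_cycVert_cycVert ((hG.2.2 _ _).1 h)).1 hne
      · rwa [k2] at h
      · have hA := (t.gained_side _ h).1
        rw [k2, hG.1] at hA
        refine absurd ?_ (Set.disjoint_left.1 (disjoint_AsetF_BsetF F) hA)
        have := attachIdx_mod F (v k) c
        simp only [w]
        rw [← cyclePt_attach hocck hc]
        exact cyclePt_mem_B (occCount_pos hocck hc) (by omega))
  rw [Fin.sum_univ_three]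
  exact key

/-- A copy of a clause vertex is not adjacent to a copy of a cycle vertex in `B` other than the
attachment vertex. -/
theorem EditTrace.not_adj_clause (hG : IsGF F G) {v c q x y : ℕ} (hc : c < F.m)
    (hocc : OccIn F v c) (hq : q % 2 = 0)
    (hne : q % (6 * occCount F v) ≠ (attachIdx F v c - 1) % (6 * occCount F v))
    (hx : t.π x = clVert c) (hy : t.π y = cyclePt F v q) : ¬ G'.Adj x y := by
  intro h
  have hA : ∀ {z}, z ∈ BsetF F → z ∉ G.A := fun hz hz' =>
    Set.disjoint_left.1 (disjoint_AsetF_BsetF F) (hG.1 ▸ hz') hz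
  rcases t.proj _ _ h with h | h | h
  · rw [hx, hy, hG.2.2] at h
    obtain ⟨w, hw, -, h⟩ := adjF_clVert h
    obtain rfl : v = w := (cycVert_inj.1 h).1
    rw [← cyclePt_attach hocc hc] at h
    exact hne (cyclePt_eq_iff.1 h).2
  · exact hA (clVert_mem_B hc) (hx ▸ (t.gained_side _ h).1)
  · exact hA (cyclePt_mem_B (occCount_pos hocc hc) hq) (hy ▸ (t.gained_side _ h).1)

open Classical in
theorem EditTrace.lost_of_clause_not_lost (hG : IsGF F G) (hbi : IsBicliqueUnion G') {v c : ℕ}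
    (hc : c < F.m) (hocc : OccIn F v c) (hs : ∀ i, t.splits (cyclePt F v i) = 0)
    (hwin : ∀ i, (if (cyclePt F v i, cyclePt F v (i + 1)) ∈ t.lost then 1 else 0) +
        (if (cyclePt F v (i + 1), cyclePt F v (i + 2)) ∈ t.lost then 1 else 0) +
        (if (cyclePt F v (i + 2), cyclePt F v (i + 3)) ∈ t.lost then 1 else 0) = 1)
    (hret : (clVert c, cycVert v (attachIdx F v c)) ∉ t.lost) :
    (cyclePt F v (attachIdx F v c), cyclePt F v (attachIdx F v c + 1)) ∈ t.lost := by
  have hd := occCount_pos hocc hc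
  have hm := attachIdx_mod F v c
  have huniq : ∀ {i y z x x'}, t.π y = cyclePt F v i → t.π z = cyclePt F v i → G'.Adj y x →
      G'.Adj z x' → y = z := by
    intro i y z x x' hy hz hyx hzx
    by_contra hne
    have := t.one_le_splits (t.adj_mem _ _ hyx) (t.adj_mem _ _ hzx) hy hz hne
    have := hs i
    omega
  have hrep : ∀ i, (cyclePt F v i, cyclePt F v (i + 1)) ∉ t.lost →
      ∃ y z, t.π y = cyclePt F v i ∧ t.π z = cyclePt F v (i + 1) ∧ G'.Adj y z :=
    fun i => t.rep _ _ (adjF0_cyclePt hd i)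
  obtain ⟨b, y, hb, hy, hby⟩ := t.rep _ _ (adjF0_clause hocc hc) hret
  obtain ⟨q, hq⟩ : ∃ q, q + 2 = attachIdx F v c - 1 + 6 * occCount F v :=
    ⟨attachIdx F v c - 1 + 6 * occCount F v - 2, by omega⟩
  have hy' : t.π y = cyclePt F v (q + 2) := by
    rw [hq, cyclePt_add_length, cyclePt_attach hocc hc, hy]
  have hne : ∀ {k}, k < 6 * occCount F v → k ≠ 2 →
      (q + k) % (6 * occCount F v) ≠ (attachIdx F v c - 1) % (6 * occCount F v) := by
    intro k hk hk2 h
    rw [← Nat.add_mod_right (attachIdx F v c - 1), ← hq] at h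
    exact hk2 (eq_of_add_mod_eq h hk (by omega))
  have key : (cyclePt F v (q + 1), cyclePt F v (q + 2)) ∉ t.lost ∧
      (cyclePt F v (q + 2), cyclePt F v (q + 3)) ∉ t.lost := by
    refine ⟨fun hl => ?_, fun hl => ?_⟩
    · have h := hwin (q + 1)
      simp only [add_assoc, Nat.reduceAdd, hl, if_true] at h
      obtain ⟨z2, z3, h2, h3, a⟩ := hrep (q + 2) (by intro h'; simp [h'] at h)
      obtain ⟨w3, w4, h3', h4, a'⟩ := hrep (q + 3) (by intro h'; simp [h'] at h)
      obtain rfl := huniq hy' h2 (G'.symm _ _ hby) a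
      obtain rfl := huniq h3 h3' (G'.symm _ _ a) a'
      exact t.not_adj_clause hG hc hocc (by omega) (hne (k := 4) (by omega) (by omega)) hb
        h4
        (hbi _ _ _ _ hby a a')
    · have h := hwin q
      simp only [hl, if_true] at h
      obtain ⟨z1, z2, h1, h2, a⟩ := hrep (q + 1) (by intro h'; simp [h'] at h)
      obtain ⟨w0, w1, h0, h1', a'⟩ := hrep q (by intro h'; simp [h'] at h)
      obtain rfl := huniq hy' h2 (G'.symm _ _ hby) (G'.symm _ _ a)
      obtain rfl := huniq h1 h1' a (G'.symm _ _ a')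
      exact t.not_adj_clause hG hc hocc (by omega) (hne (k := 0) (by omega) (by omega)) hb h0
        (hbi _ _ _ _ hby (G'.symm _ _ a) (G'.symm _ _ a'))
  have h := hwin (q + 1)
  simp only [add_assoc, Nat.reduceAdd, key.1, key.2, if_false, zero_add] at h
  have h' : (cyclePt F v (q + 3), cyclePt F v (q + 4)) ∈ t.lost := by
    by_contra h'; simp [h'] at h
  rw [show q + 3 = attachIdx F v c + 6 * occCount F v by omega,
    show q + 4 = attachIdx F v c + 1 + 6 * occCount F v by omega, cyclePt_add_length,
    cyclePt_add_length] at h'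
  exact h'

/-- A cheap trace ending in a disjoint union of bicliques is tight everywhere. -/
theorem EditTrace.tight (hG : IsGF F G) (hbi : IsBicliqueUnion G') (hcost : t.cost ≤ 8 * F.m) :
    (∀ v ∈ occVars F, (∀ i, t.splits (cyclePt F v i) = 0) ∧
      ∀ i, (if (cyclePt F v i, cyclePt F v (i + 1)) ∈ t.lost then 1 else 0) +
        (if (cyclePt F v (i + 1), cyclePt F v (i + 2)) ∈ t.lost then 1 else 0) +
        (if (cyclePt F v (i + 2), cyclePt F v (i + 3)) ∈ t.lost then 1 else 0) = 1) ∧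
    ∀ c < F.m, t.clauseCost c ≤ 2 := by
  classical
  let ι : ℕ → ℕ → ℕ := fun v c => if t.ClauseIsolated v c then 1 else 0
  have hsum := t.sum_cycleCost_add_sum_clauseCost_le (occVars F) (Finset.range F.m)
  have hcl : ∀ c ∈ Finset.range F.m, 6 ≤ 3 * t.clauseCost c + 2 * ∑ j, ι (F.lit c j).1 c := by
    intro c hc
    have h1 := t.clause_bound hG hbi (Finset.mem_range.1 hc)
    have h2 : ∑ j, ι (F.lit c j).1 c ≤ ∑ j : Fin 3, 1 :=
      Finset.sum_le_sum fun j _ => by simp only [ι]; split_ifs <;> simp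
    simp only [Finset.sum_const, Finset.card_univ, Fintype.card_fin, smul_eq_mul, mul_one] at h2
    change 2 ≤ t.clauseCost c + (∑ j, ι (F.lit c j).1 c - 1) at h1
    omega
  have hcy : ∀ v ∈ occVars F, 6 * occCount F v + 2 * ∑ c ∈ Finset.range F.m with OccIn F v c, ι v c
      ≤ 3 * t.cycleCost v := fun v hv => (t.cycle_bound hG hbi (one_le_occCount hv)).1
  have hcls := Finset.sum_le_sum hcl
  have hcys := Finset.sum_le_sum hcy
  have hd := sum_occCount F
  have hι := sum_occVars F ι
  simp only [Finset.sum_add_distrib, ← Finset.mul_sum, Finset.sum_const, Finset.card_range,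
    smul_eq_mul] at hcls hcys
  have heq := (Finset.sum_eq_sum_iff_of_le hcy).1 (by
    simp only [Finset.sum_add_distrib, ← Finset.mul_sum]
    omega)
  have hcyc := fun v (hv : v ∈ occVars F) =>
    (t.cycle_bound hG hbi (one_le_occCount hv)).2 (heq v hv).ge
  refine ⟨fun v hv => ⟨(hcyc v hv).1, by convert (hcyc v hv).2.2⟩, ?_⟩
  have hι0 : ∀ c ∈ Finset.range F.m, ∑ j, ι (F.lit c j).1 c = 0 := fun c hc =>
    Finset.sum_eq_zero fun j _ => by
      have hc := Finset.mem_range.1 hc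
      have := (hcyc _ (mem_occVars.2 ⟨c, hc, occIn_lit F c j⟩)).2.1 c hc (occIn_lit F c j)
      simp [ι, this]
  have hι1 := Finset.sum_eq_zero hι0
  have heq' := (Finset.sum_eq_sum_iff_of_le hcl).1 (by
    simp only [Finset.sum_add_distrib, ← Finset.mul_sum, Finset.sum_const, Finset.card_range,
      smul_eq_mul]
    omega)
  intro c hc
  have h1 := heq' c (Finset.mem_range.2 hc)
  omega

theorem EditTrace.satisfiable (hG : IsGF F G) (hbi : IsBicliqueUnion G')
    (hcost : t.cost ≤ 8 * F.m) : Satisfiable F := by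
  classical
  obtain ⟨hcyc, hcl⟩ := t.tight hG hbi hcost
  refine ⟨fun v => decide ((cyclePt F v 1, cyclePt F v 2) ∈ t.lost), fun c hc => ?_⟩
  obtain ⟨j, hj⟩ : ∃ j : Fin 3,
      (clVert c, cycVert (F.lit c j).1 (attachIdx F (F.lit c j).1 c)) ∉ t.lost := by
    by_contra! hall
    have h := Finset.card_le_card_of_injOn (s := Finset.univ)
      (t := t.lost.filter fun p => p.1 = clVert c)
      (fun j : Fin 3 => (clVert c, cycVert (F.lit c j).1 (attachIdx F (F.lit c j).1 c)))
      (fun j _ => by simpa using hall j)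
      (fun i _ j _ h => F.distinct c hc i j (cycVert_inj.1 (Prod.ext_iff.1 h).2).1)
    have := hcl c hc
    unfold EditTrace.clauseCost at this
    simp only [Finset.card_univ, Fintype.card_fin] at h
    omega
  refine ⟨j, ?_⟩
  have hocc := occIn_lit F c j
  have hpos := posIn_lit_iff hc j
  obtain ⟨hs, hwin⟩ := hcyc _ (mem_occVars.2 ⟨c, hc, hocc⟩)
  have hlost := t.lost_of_clause_not_lost hG hbi hc hocc hs (by convert hwin) hj
  generalize (F.lit c j).1 = v at *
  let δ : ℕ → ℕ := fun i => if (cyclePt F v i, cyclePt F v (i + 1)) ∈ t.lost then 1 else 0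
  have hδ : ∀ i, δ i + δ (i + 1) + δ (i + 2) = 1 := hwin
  have hper : ∀ i k, δ (i + 6 * k) = δ i := by
    intro i k
    induction k with
    | zero => rfl
    | succ k ih =>
      rw [← ih]
      have h0 := hδ (i + 6 * k)
      have h1 := hδ (i + 6 * k + 1)
      have h2 := hδ (i + 6 * k + 2)
      have h3 := hδ (i + 6 * k + 3)
      have h4 := hδ (i + 6 * k + 4)
      simp only [mul_add, add_assoc, Nat.reduceAdd, Nat.reduceMul] at *
      omega
  have hone : δ (attachIdx F v c) = 1 := if_pos hlost
  have hδ1 : decide ((cyclePt F v 1, cyclePt F v 2) ∈ t.lost) = decide (δ 1 = 1) := by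
    simp [δ]
  simp only
  rw [hδ1]
  rcases hb : (F.lit c j).2 with _ | _
  · rw [attachIdx, if_neg (by simp [hpos, hb]), add_comm, hper] at hone
    have h0 := hδ 0
    have h1 := hδ 1
    simp only [zero_add, Nat.reduceAdd] at h0 h1
    exact decide_eq_false (by omega)
  · rw [attachIdx, if_pos (hpos.2 hb), add_comm, hper] at hone
    exact decide_eq_true hone

end Trace

/-! ### Deleting edges according to a satisfying assignment -/

theorem exists_deletions (sA sB : Bool) (D : Finset (ℕ × ℕ)) :
    ∀ G : BGraph, (∀ p ∈ D, G.Adj p.1 p.2 ∧ p.swap ∉ D) →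
      ∃ L G', L.length = D.card ∧ ApplySeq sA sB L G G' ∧
        ∀ x y, G'.Adj x y ↔ G.Adj x y ∧ (x, y) ∉ D ∧ (y, x) ∉ D := by
  induction D using Finset.induction_on with
  | empty => exact fun G _ => ⟨[], G, rfl, rfl, by simp⟩
  | insert p D hp ih =>
    intro G hD
    let G₁ : BGraph :=
      { G with
        Adj := fun x y => G.Adj x y ∧ ¬((x = p.1 ∧ y = p.2) ∨ (x = p.2 ∧ y = p.1))
        symm := fun x y h => ⟨G.symm _ _ h.1, fun h' => h.2 (by tauto)⟩ }
    obtain ⟨L, G', hL, hseq, hadj⟩ := ih G₁ (by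
      intro q hq
      obtain ⟨h1, h2⟩ := hD q (Finset.mem_insert_of_mem hq)
      refine ⟨⟨h1, ?_⟩, fun h => h2 (Finset.mem_insert_of_mem h)⟩
      rintro (⟨h3, h4⟩ | ⟨h3, h4⟩)
      · exact hp (by rwa [show p = q from Prod.ext h3.symm h4.symm])
      · exact h2 (by
          rw [show q.swap = p from Prod.ext h4 h3]; exact Finset.mem_insert_self _ _))
    refine ⟨Op.del p.1 p.2 :: L, G', by simp [hL, hp], ⟨G₁, OpStep.del
      (hD p (Finset.mem_insert_self _ _)).1 rfl rfl fun _ _ => Iff.rfl, hseq⟩, fun x y => ?_⟩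
    rw [hadj]
    simp only [G₁, Finset.mem_insert, Prod.ext_iff]
    tauto

theorem isBicliqueUnion_of_leaf {G : BGraph}
    (h : ∀ b c, G.Adj b c → (∀ y z, G.Adj b y → G.Adj b z → y = z) ∨
      ∀ y z, G.Adj c y → G.Adj c z → y = z) : IsBicliqueUnion G := by
  intro a b c d hab hbc hcd
  rcases h b c hbc with h | h
  · rw [h a c (G.symm _ _ hab) hbc]; exact hcd
  · rw [h d b hcd (G.symm _ _ hbc)]; exact hab

theorem adjF_cyclePt {F : CNF3} {v i y : ℕ} (h : AdjF F (cyclePt F v i) y) :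
    y = cyclePt F v (i + 1) ∨ y = cyclePt F v (i + 6 * occCount F v - 1) ∨
      ∃ c < F.m, OccIn F v c ∧ y = clVert c ∧
        i % (6 * occCount F v) + 1 = attachIdx F v c := by
  rcases h with (⟨w, k, hk, hk', h1, rfl⟩ | ⟨c, hc, w, hw, h1, rfl⟩) |
    (⟨w, k, hk, hk', rfl, h1⟩ | ⟨c, hc, w, hw, rfl, h1⟩)
  · obtain ⟨rfl, rfl⟩ := cycVert_inj.1 h1
    exact Or.inl (by simp only [cyclePt, Nat.mod_add_mod])
  · exact absurd h1 cycVert_ne_clVert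
  · obtain ⟨rfl, h⟩ := cycVert_inj.1 h1
    refine Or.inr (Or.inl ?_)
    rw [show cycVert v k = cyclePt F v (k - 1) by
      rw [cyclePt_of_lt (by omega), Nat.sub_add_cancel hk], cyclePt_eq_iff]
    refine ⟨rfl, Nat.ModEq.add_right_cancel' 1 ?_⟩
    rw [Nat.ModEq, Nat.sub_add_cancel hk, Nat.sub_add_cancel (by omega), Nat.add_mod_right]
    omega
  · obtain ⟨rfl, h⟩ := cycVert_inj.1 h1
    exact Or.inr (Or.inr ⟨c, hc, hw, rfl, h⟩)

/-- The residue modulo `3` of the deleted edges on a cycle of a variable with the given value. -/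
def cutResidue : Bool → ℕ
  | true => 1
  | false => 0

/-- The deleted edges on the cycle of `v`. -/
noncomputable def cycleCut (F : CNF3) (σ : ℕ → Bool) (v : ℕ) : Finset (ℕ × ℕ) :=
  (Finset.range (2 * occCount F v)).image fun k =>
    (cyclePt F v (3 * k + cutResidue (σ v)), cyclePt F v (3 * k + cutResidue (σ v) + 1))

/-- The deleted edges at the clause `c`, in which the literal `j c` is kept. -/
noncomputable def clauseCut (F : CNF3) (j : ℕ → Fin 3) (c : ℕ) : Finset (ℕ × ℕ) :=
  (Finset.univ.erase (j c)).image fun i =>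
    (clVert c, cycVert (F.lit c i).1 (attachIdx F (F.lit c i).1 c))

/-- All deleted edges. -/
noncomputable def cut (F : CNF3) (σ : ℕ → Bool) (j : ℕ → Fin 3) : Finset (ℕ × ℕ) :=
  (occVars F).biUnion (cycleCut F σ) ∪ (Finset.range F.m).biUnion (clauseCut F j)

theorem card_cut_le (F : CNF3) (σ : ℕ → Bool) (j : ℕ → Fin 3) : (cut F σ j).card ≤ 8 * F.m := by
  have h1 : ((occVars F).biUnion (cycleCut F σ)).card ≤ ∑ v ∈ occVars F, 2 * occCount F v :=
    Finset.card_biUnion_le.trans <| Finset.sum_le_sum fun v _ =>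
      Finset.card_image_le.trans (Finset.card_range _).le
  have h2 : ((Finset.range F.m).biUnion (clauseCut F j)).card ≤ ∑ c ∈ Finset.range F.m, 2 :=
    Finset.card_biUnion_le.trans <| Finset.sum_le_sum fun c _ =>
      Finset.card_image_le.trans (by simp)
  rw [← Finset.mul_sum, sum_occCount] at h1
  simp only [Finset.sum_const, Finset.card_range, smul_eq_mul] at h2
  have := Finset.card_union_le ((occVars F).biUnion (cycleCut F σ))
    ((Finset.range F.m).biUnion (clauseCut F j))
  unfold cut
  omega

theorem adjF0_of_mem_cut {F : CNF3} {σ : ℕ → Bool} {j : ℕ → Fin 3} {p : ℕ × ℕ}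
    (h : p ∈ cut F σ j) : AdjF0 F p.1 p.2 := by
  simp only [cut, Finset.mem_union, Finset.mem_biUnion, cycleCut, clauseCut, Finset.mem_image,
    Finset.mem_range] at h
  rcases h with ⟨v, hv, k, -, rfl⟩ | ⟨c, hc, i, -, rfl⟩
  · exact adjF0_cyclePt (one_le_occCount hv) _
  · exact adjF0_clause (occIn_lit F c i) hc

theorem cyclePt_mem_cut {F : CNF3} {σ : ℕ → Bool} (j : ℕ → Fin 3) {v i : ℕ} (hv : v ∈ occVars F)
    (hi : i % 3 = cutResidue (σ v)) : (cyclePt F v i, cyclePt F v (i + 1)) ∈ cut F σ j := by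
  have hd := one_le_occCount hv
  have hlt := Nat.mod_lt i (show 6 * occCount F v > 0 by omega)
  have hmod : i % (6 * occCount F v) % 3 = i % 3 :=
    Nat.mod_mod_of_dvd _ ⟨2 * occCount F v, by ring⟩
  refine Finset.mem_union_left _ (Finset.mem_biUnion.2 ⟨v, hv, Finset.mem_image.2
    ⟨i % (6 * occCount F v) / 3, Finset.mem_range.2 (by omega), ?_⟩⟩)
  rw [show 3 * (i % (6 * occCount F v) / 3) + cutResidue (σ v) = i % (6 * occCount F v) by omega]
  simp [cyclePt]

theorem clause_mem_cut {F : CNF3} (σ : ℕ → Bool) {j : ℕ → Fin 3} {c : ℕ} {i : Fin 3}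
    (hc : c < F.m) (hi : i ≠ j c) :
    (clVert c, cycVert (F.lit c i).1 (attachIdx F (F.lit c i).1 c)) ∈ cut F σ j :=
  Finset.mem_union_right _ (Finset.mem_biUnion.2 ⟨c, Finset.mem_range.2 hc, Finset.mem_image.2
    ⟨i, by simp [hi], rfl⟩⟩)

theorem exists_solves_of_satisfiable {F : CNF3} {G : BGraph} (hG : IsGF F G) (hF : Satisfiable F)
    (sA sB : Bool) : ∃ L : List Op, L.length ≤ 8 * F.m ∧ Solves sA sB L G := by
  obtain ⟨σ, hσ⟩ := hF
  have hj : ∀ c, ∃ i : Fin 3, c < F.m → σ (F.lit c i).1 = (F.lit c i).2 := by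
    intro c
    by_cases hc : c < F.m
    · obtain ⟨i, hi⟩ := hσ c hc
      exact ⟨i, fun _ => hi⟩
    · exact ⟨0, fun h => absurd h hc⟩
  choose j hj using hj
  obtain ⟨L, H, hL, hseq, hadj⟩ := exists_deletions sA sB (cut F σ j) G fun p hp =>
    ⟨(hG.2.2 _ _).2 (Or.inl (adjF0_of_mem_cut hp)),
      fun h => adjF0_asymm (adjF0_of_mem_cut hp) (adjF0_of_mem_cut h)⟩
  refine ⟨L, hL.trans_le (card_cut_le F σ j), H, hseq, isBicliqueUnion_of_leaf ?_⟩
  have hclause : ∀ c y, H.Adj (clVert c) y →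
      c < F.m ∧ y = cycVert (F.lit c (j c)).1 (attachIdx F (F.lit c (j c)).1 c) := by
    intro c y h
    obtain ⟨h1, h2, -⟩ := (hadj _ _).1 h
    obtain ⟨v, ⟨i, rfl⟩, hc, rfl⟩ := adjF_clVert ((hG.2.2 _ _).1 h1)
    refine ⟨hc, ?_⟩
    by_cases hi : i = j c
    · rw [hi]
    · exact absurd (clause_mem_cut σ hc hi) h2
  have hleaf : ∀ v ∈ occVars F, ∀ i, i % 3 ≠ (cutResidue (σ v) + 2) % 3 →
      ∀ y z, H.Adj (cyclePt F v i) y → H.Adj (cyclePt F v i) z → y = z := by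
    intro v hv i hi
    have hd := one_le_occCount hv
    have hr : cutResidue (σ v) < 2 := by cases σ v <;> simp [cutResidue]
    suffices h : ∃ q, ∀ y, H.Adj (cyclePt F v i) y → y = q by
      obtain ⟨q, hq⟩ := h
      exact fun y z hy hz => (hq y hy).trans (hq z hz).symm
    refine ⟨if i % 3 = cutResidue (σ v) then cyclePt F v (i + 6 * occCount F v - 1) else
      cyclePt F v (i + 1), fun y hy => ?_⟩
    obtain ⟨h1, h2, h3⟩ := (hadj _ _).1 hy
    rcases adjF_cyclePt ((hG.2.2 _ _).1 h1) with rfl | rfl | ⟨c, hc, hocc, rfl, hatt⟩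
    · exact (if_neg fun h => h2 (cyclePt_mem_cut j hv h)).symm
    · refine (if_pos ?_).symm
      by_contra h
      refine h3 ?_
      have := cyclePt_mem_cut (σ := σ) j (i := i + 6 * occCount F v - 1) hv (by omega)
      rwa [Nat.sub_add_cancel (by omega), cyclePt_add_length] at this
    · exfalso
      obtain ⟨-, h⟩ := hclause c _ (H.symm _ _ hy)
      obtain ⟨hv', -⟩ := cycVert_inj.1 h
      have hval := hj c hc
      have hpos := posIn_lit_iff hc (j c)
      rw [← hv'] at hval hpos
      have hmod : i % (6 * occCount F v) % 3 = i % 3 :=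
        Nat.mod_mod_of_dvd _ ⟨2 * occCount F v, by ring⟩
      rw [← hval] at hpos
      rw [attachIdx] at hatt
      rcases hs : σ v with _ | _
      · rw [if_neg (by simp [hpos, hs])] at hatt
        rw [hs, cutResidue] at hi
        omega
      · rw [if_pos (hpos.2 hs)] at hatt
        rw [hs, cutResidue] at hi
        omega
  have hone : ∀ b c, AdjF0 F b c → (∀ y z, H.Adj b y → H.Adj b z → y = z) ∨
      ∀ y z, H.Adj c y → H.Adj c z → y = z := by
    rintro b c (⟨v, i, hi, hi', rfl, rfl⟩ | ⟨c, hc, v, hv, rfl, rfl⟩)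
    · have hv : v ∈ occVars F := by
        have : 0 < occCount F v := by omega
        obtain ⟨c, hc⟩ := Finset.card_pos.1 this
        exact mem_occVars.2 ⟨c, by simpa using hc⟩
      rw [show cycVert v i = cyclePt F v (i - 1) by
        rw [cyclePt_of_lt (by omega), Nat.sub_add_cancel hi]]
      by_cases h1 : (i - 1) % 3 = (cutResidue (σ v) + 2) % 3
      · exact Or.inr (hleaf v hv i (by omega))
      · exact Or.inl (hleaf v hv _ h1)
    · exact Or.inl fun y z hy hz => (hclause c y hy).2.trans (hclause c z hz).2.symm
  intro b c h
  rcases (hG.2.2 _ _).1 ((hadj _ _).1 h).1 with h' | h'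
  · exact hone b c h'
  · exact (hone c b h').symm

theorem satisfiable_of_solves {F : CNF3} {G : BGraph} (hG : IsGF F G) {sA sB : Bool} {L : List Op}
    (hL : L.length ≤ 8 * F.m) (h : Solves sA sB L G) : Satisfiable F := by
  obtain ⟨G', hseq, hbi⟩ := h
  let t₀ : EditTrace (AdjF0 F) G G :=
    EditTrace.refl (fun x y h => (hG.2.2 x y).2 (Or.inl h)) fun _ _ h => hG.adj_mem h
  have h₀ : t₀.cost = 0 := EditTrace.cost_refl _ _
  obtain ⟨t, ht⟩ := t₀.exists_of_applySeq (fun _ _ => adjF0_asymm) L hseq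
  exact t.satisfiable hG hbi (by omega)

/-- For a 3-CNF formula `F` with `m` clauses (three distinct
variables per clause), the constructed graph `G_F` (with bipartition `(A,B)`,
`A` the even-indexed cycle vertices, `B` the odd-indexed cycle vertices and
the clause vertices) can be transformed into a disjoint union of bicliques by
at most `8m` edge editions and vertex splittings iff `F` is satisfiable; and
the same holds when vertex splittings are allowed only on vertices of `B`
(and their copies). -/
theorem construction_correct (F : CNF3) (G : BGraph) (hG : IsGF F G) :
    ((∃ L, L.length ≤ 8 * F.m ∧ Solves true true L G) ↔ Satisfiable F) ∧
    ((∃ L, L.length ≤ 8 * F.m ∧ Solves false true L G) ↔ Satisfiable F) :=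
  ⟨⟨fun ⟨_, hL, h⟩ => satisfiable_of_solves hG hL h,
      fun h => exists_solves_of_satisfiable hG h true true⟩,
    ⟨fun ⟨_, hL, h⟩ => satisfiable_of_solves hG hL h,
      fun h => exists_solves_of_satisfiable hG h false true⟩⟩

end BCE
end

section
/- Let T = (A, B, E) be a tree and let y be a cut vertex of T partitioning V(T) \ {y} into sets X and Y such that the subgraph induced by X ∪ {y} is a biclique, some vertex of X is at distance two from y, and |N(y) ∩ Y| = 1. Then bceovs(T, A) = 1 + bceovs(T[Y], A) and bcevs(T) = 1 + bcevs(T[Y]). -/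
namespace BCE

theorem BGraph.ext_of {G H : BGraph} (hA : G.A = H.A) (hB : G.B = H.B)
    (hadj : ∀ u v, G.Adj u v ↔ H.Adj u v) : G = H := by
  cases G
  cases H
  obtain rfl : _ = _ := hA
  obtain rfl : _ = _ := hB
  congr
  funext u v
  exact propext (hadj u v)

theorem Bipartite.mem_left {G : BGraph} (h : Bipartite G) {u v : ℕ} (huv : G.Adj u v) :
    u ∈ verts G := by
  rcases h.2 u v huv with h | h
  · exact Or.inl h.1
  · exact Or.inr h.1

theorem Bipartite.mem_right {G : BGraph} (h : Bipartite G) {u v : ℕ} (huv : G.Adj u v) :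
    v ∈ verts G :=
  h.mem_left (G.symm u v huv)

theorem Bipartite.irrefl {G : BGraph} (h : Bipartite G) {u : ℕ} : ¬ G.Adj u u := by
  intro huu
  rcases h.2 u u huu with h' | h'
  · exact Set.disjoint_left.1 h.1 h'.1 h'.2
  · exact Set.disjoint_left.1 h.1 h'.2 h'.1

theorem Bipartite.induce {G : BGraph} (h : Bipartite G) (S : Set ℕ) :
    Bipartite (induce G S) := by
  refine ⟨h.1.mono Set.inter_subset_left Set.inter_subset_left, ?_⟩
  rintro u v ⟨huv, hu, hv⟩
  rcases h.2 u v huv with h' | h'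
  · exact Or.inl ⟨⟨h'.1, hu⟩, ⟨h'.2, hv⟩⟩
  · exact Or.inr ⟨⟨h'.1, hu⟩, ⟨h'.2, hv⟩⟩

theorem IsBicliqueUnion.induce {G : BGraph} (h : IsBicliqueUnion G) (S : Set ℕ) :
    IsBicliqueUnion (induce G S) :=
  fun a b c d hab hbc hcd => ⟨h a b c d hab.1 hbc.1 hcd.1, hab.2.1, hcd.2.2⟩

/-- Every operation preserves bipartiteness. -/
theorem OpStep.bipartite {sA sB : Bool} {op : Op} {G G' : BGraph}
    (hs : OpStep sA sB op G G') (h : Bipartite G) : Bipartite G' := by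
  cases hs with
  | del _ hA hB hadj =>
    refine ⟨by rw [hA, hB]; exact h.1, fun x y hxy => ?_⟩
    rw [hA, hB]
    exact h.2 x y ((hadj x y).1 hxy).1
  | add hu hv _ hA hB hadj =>
    refine ⟨by rw [hA, hB]; exact h.1, fun x y hxy => ?_⟩
    rw [hA, hB]
    rcases (hadj x y).1 hxy with h' | ⟨rfl, rfl⟩ | ⟨rfl, rfl⟩
    · exact h.2 x y h'
    · exact Or.inl ⟨hu, hv⟩
    · exact Or.inr ⟨hv, hu⟩
  | @split _ _ v v' N1 N2 hside hfresh hcover hA hB hadj =>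
    have hN : ∀ u, u ∈ N1 ∨ u ∈ N2 → G.Adj v u := fun u hu => by
      have : u ∈ nbhd G v := hcover ▸ hu
      exact this
    have hv'A : v' ∉ G.A := fun h' => hfresh (Or.inl h')
    have hv'B : v' ∉ G.B := fun h' => hfresh (Or.inr h')
    have hd := Set.disjoint_left.1 h.1
    by_cases hvA : v ∈ G.A
    · obtain ⟨eA, eB⟩ := hA hvA
      have hNB : ∀ u, u ∈ N1 ∨ u ∈ N2 → u ∈ G.B := fun u hu => by
        rcases h.2 v u (hN u hu) with h' | h'
        · exact h'.2
        · exact absurd h'.1 (hd hvA)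
      refine ⟨by rw [eA, eB, Set.disjoint_insert_left]; exact ⟨hv'B, h.1⟩, fun x y hxy => ?_⟩
      simp only [eA, eB, Set.mem_insert_iff]
      have := h.2 x y
      have := hNB x
      have := hNB y
      have := (hadj x y).1 hxy
      grind
    · have hvB : v ∈ G.B := by tauto
      obtain ⟨eA, eB⟩ := hB hvB
      have hNA : ∀ u, u ∈ N1 ∨ u ∈ N2 → u ∈ G.A := fun u hu => by
        rcases h.2 v u (hN u hu) with h' | h'
        · exact absurd h'.1 hvA
        · exact h'.2
      refine ⟨by rw [eA, eB, Set.disjoint_insert_right]; exact ⟨hv'A, h.1⟩, fun x y hxy => ?_⟩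
      simp only [eA, eB, Set.mem_insert_iff]
      have := h.2 x y
      have := hNA x
      have := hNA y
      have := (hadj x y).1 hxy
      grind

/-- Three vertices outside `S` form a walk `a - x - y` such that `y` has a neighbour in `S`
while `a` has none: an obstruction to being a union of bicliques that persists under
operations inside `S`. -/
def HasTail (G : BGraph) (S : Set ℕ) : Prop :=
  ∃ a x y, a ∉ S ∧ x ∉ S ∧ y ∉ S ∧ G.Adj a x ∧ G.Adj x y ∧ (∃ z ∈ S, G.Adj y z) ∧
    ∀ z ∈ S, ¬ G.Adj a z

theorem HasTail.not_isBicliqueUnion {G : BGraph} {S : Set ℕ} (h : HasTail G S) :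
    ¬ IsBicliqueUnion G := by
  obtain ⟨a, x, y, -, -, -, hax, hxy, ⟨z, hz, hyz⟩, ha⟩ := h
  exact fun hu => ha z hz (hu a x y z hax hxy hyz)

/-- An operation restricts to the subgraph induced by `S` (enlarged by the copies of its
vertices): either it does nothing there, or it is an operation there that keeps tails. -/
theorem OpStep.restrict {sA sB : Bool} {op : Op} {G G' : BGraph}
    (hs : OpStep sA sB op G G') (h : Bipartite G) {S : Set ℕ} (hS : S ⊆ verts G) :
    ∃ S' ⊆ verts G', induce G' S' = induce G S ∨
      (HasTail G S → HasTail G' S') ∧ ∃ op', OpStep sA sB op' (induce G S) (induce G' S') := by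
  cases hs with
  | @del _ _ u v huv hA hB hadj =>
    refine ⟨S, by simpa [verts, hA, hB] using hS, ?_⟩
    by_cases hin : u ∈ S ∧ v ∈ S
    · refine Or.inr ⟨?_, Op.del u v, OpStep.del ⟨huv, hin⟩ ?_ ?_ ?_⟩
      · rintro ⟨a, x, y, ha, hx, hy, hax, hxy, ⟨z, hz, hyz⟩, hna⟩
        refine ⟨a, x, y, ha, hx, hy, ?_, ?_, ⟨z, hz, ?_⟩, ?_⟩ <;> grind
      · simp [BCE.induce, hA]
      · simp [BCE.induce, hB]
      · intro x y
        simp only [BCE.induce, hadj]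
        tauto
    · refine Or.inl (BGraph.ext_of ?_ ?_ ?_)
      · simp [BCE.induce, hA]
      · simp [BCE.induce, hB]
      · intro x y
        simp only [BCE.induce, hadj]
        grind
  | @add _ _ u v hu hv huv hA hB hadj =>
    refine ⟨S, by simpa [verts, hA, hB] using hS, ?_⟩
    by_cases hin : u ∈ S ∧ v ∈ S
    · refine Or.inr ⟨?_, Op.add u v, OpStep.add ⟨hu, hin.1⟩ ⟨hv, hin.2⟩ (fun h' => huv h'.1)
        ?_ ?_ ?_⟩
      · rintro ⟨a, x, y, ha, hx, hy, hax, hxy, ⟨z, hz, hyz⟩, hna⟩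
        refine ⟨a, x, y, ha, hx, hy, ?_, ?_, ⟨z, hz, ?_⟩, ?_⟩ <;> grind
      · simp [BCE.induce, hA]
      · simp [BCE.induce, hB]
      · intro x y
        simp only [BCE.induce, hadj]
        grind
    · refine Or.inl (BGraph.ext_of ?_ ?_ ?_)
      · simp [BCE.induce, hA]
      · simp [BCE.induce, hB]
      · intro x y
        simp only [BCE.induce, hadj]
        grind
  | @split _ _ v v' N1 N2 hside hfresh hcover hA hB hadj =>
    have hN : ∀ u, G.Adj v u ↔ u ∈ N1 ∨ u ∈ N2 := fun u => by
      change u ∈ nbhd G v ↔ u ∈ N1 ∪ N2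
      rw [hcover]
    have hv'A : v' ∉ G.A := fun h' => hfresh (Or.inl h')
    have hv'B : v' ∉ G.B := fun h' => hfresh (Or.inr h')
    have hv'S : v' ∉ S := fun h' => hfresh (hS h')
    have hadjl : ∀ u, ¬ G.Adj v' u := fun u h' => hfresh (h.mem_left h')
    have hadjr : ∀ u, ¬ G.Adj u v' := fun u h' => hfresh (h.mem_right h')
    have hA' : G'.A = G.A ∨ G'.A = insert v' G.A := by
      rcases hside with h' | h'
      · exact Or.inr (hA h'.1).1
      · exact Or.inl (hB h'.1).1
    have hB' : G'.B = G.B ∨ G'.B = insert v' G.B := by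
      rcases hside with h' | h'
      · exact Or.inl (hA h'.1).2
      · exact Or.inr (hB h'.1).2
    have hsub : verts G ⊆ verts G' := by
      apply Set.union_subset_union
      · rcases hA' with e | e <;> simp [e]
      · rcases hB' with e | e <;> simp [e]
    have hv' : v' ∈ verts G' := by
      rcases hside with h' | h'
      · exact Or.inl (by simp [(hA h'.1).1])
      · exact Or.inr (by simp [(hB h'.1).2])
    have hirr : ∀ u, ¬ G.Adj u u := fun u => h.irrefl
    have hsymm := G.symm
    by_cases hin : v ∈ S
    · refine ⟨insert v' S, Set.insert_subset hv' (hS.trans hsub), Or.inr ⟨?_,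
        Op.split v v' (N1 ∩ S) (N2 ∩ S), OpStep.split ?_ ?_ ?_ ?_ ?_ ?_⟩⟩
      · rintro ⟨a, x, y, ha, hx, hy, hax, hxy, ⟨z, hz, hyz⟩, hna⟩
        refine ⟨a, x, y, by grind, by grind, by grind, by grind, by grind, ?_, ?_⟩
        · by_cases hzv : z = v
          · subst hzv
            rcases (hN y).1 (hsymm _ _ hyz) with h1 | h2
            · exact ⟨z, by simp [hz], by grind⟩
            · exact ⟨v', by simp, by grind⟩
          · exact ⟨z, by simp [hz], by grind⟩
        · grind
      · exact hside.imp (fun h' => ⟨⟨h'.1, hin⟩, h'.2⟩) (fun h' => ⟨⟨h'.1, hin⟩, h'.2⟩)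
      · exact fun h' => hfresh (h'.imp And.left And.left)
      · ext u
        simp only [nbhd, BCE.induce, Set.mem_union, Set.mem_inter_iff, Set.mem_ofPred_eq, hN]
        tauto
      · intro h'
        obtain ⟨eA, eB⟩ := hA h'.1
        constructor <;> ext u <;> simp only [BCE.induce, eA, eB, Set.mem_inter_iff,
          Set.mem_insert_iff] <;> grind
      · intro h'
        obtain ⟨eA, eB⟩ := hB h'.1
        constructor <;> ext u <;> simp only [BCE.induce, eA, eB, Set.mem_inter_iff,
          Set.mem_insert_iff] <;> grind
      · intro x y
        simp only [BCE.induce, hadj, Set.mem_inter_iff, Set.mem_insert_iff]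
        grind
    · refine ⟨S, hS.trans hsub, Or.inl (BGraph.ext_of ?_ ?_ ?_)⟩
      · ext u
        simp only [BCE.induce, Set.mem_inter_iff]
        grind
      · ext u
        simp only [BCE.induce, Set.mem_inter_iff]
        grind
      · intro x y
        simp only [BCE.induce, hadj]
        grind

/-- A solution for `G` restricts to a solution for an induced subgraph, and it gets strictly
shorter in the presence of a tail. -/
theorem Solves.restrict {sA sB : Bool} {L : List Op} {G : BGraph} (hL : Solves sA sB L G)
    (h : Bipartite G) {S : Set ℕ} (hS : S ⊆ verts G) :
    ∃ L', Solves sA sB L' (induce G S) ∧ L'.length ≤ L.length ∧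
      (HasTail G S → L'.length < L.length) := by
  induction L generalizing G S with
  | nil =>
    obtain ⟨G', rfl, hG⟩ := hL
    exact ⟨[], ⟨_, rfl, hG.induce S⟩, le_rfl, fun ht => absurd hG ht.not_isBicliqueUnion⟩
  | cons op L ih =>
    obtain ⟨G'', ⟨G', hs, hseq⟩, hG⟩ := hL
    obtain ⟨S', hS', hcase⟩ := hs.restrict h hS
    obtain ⟨L', hL', hle, hlt⟩ := ih ⟨G'', hseq, hG⟩ (hs.bipartite h) hS'
    rcases hcase with heq | ⟨htail, op', hs'⟩
    · refine ⟨L', heq ▸ hL', ?_, fun _ => ?_⟩ <;> simp only [List.length_cons] <;> omega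
    · obtain ⟨H, hseq', hH⟩ := hL'
      refine ⟨op' :: L', ⟨H, ⟨_, hs', hseq'⟩, hH⟩, ?_, fun ht => ?_⟩
      · simpa using hle
      · simpa using hlt (htail ht)

/-- The disjoint union of the image of `H` under `f` with `R`. -/
def glue (f : ℕ → ℕ) (R H : BGraph) : BGraph where
  A := f '' H.A ∪ R.A
  B := f '' H.B ∪ R.B
  finA := (H.finA.image f).union R.finA
  finB := (H.finB.image f).union R.finB
  Adj := fun x y => (∃ u v, H.Adj u v ∧ f u = x ∧ f v = y) ∨ R.Adj x y
  symm := by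
    rintro x y (⟨u, v, huv, hu, hv⟩ | hxy)
    · exact Or.inl ⟨v, u, H.symm u v huv, hv, hu⟩
    · exact Or.inr (R.symm x y hxy)

theorem IsBicliqueUnion.glue {f : ℕ → ℕ} (hf : Function.Injective f) {R H : BGraph}
    (hR : Bipartite R) (hfR : ∀ n, f n ∉ verts R) (hRu : IsBicliqueUnion R)
    (hHu : IsBicliqueUnion H) : IsBicliqueUnion (glue f R H) := by
  have hl : ∀ n u, ¬ R.Adj (f n) u := fun n u h' => hfR n (hR.mem_left h')
  have hr : ∀ n u, ¬ R.Adj u (f n) := fun n u h' => hfR n (hR.mem_right h')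
  rintro a b c d (⟨u, v, huv, rfl, rfl⟩ | hab) hbc hcd
  · rcases hbc with ⟨v', w, hvw, hv, rfl⟩ | hbc
    · obtain rfl := hf hv
      rcases hcd with ⟨w', x, hwx, hw, rfl⟩ | hcd
      · obtain rfl := hf hw
        exact Or.inl ⟨u, x, hHu _ _ _ _ huv hvw hwx, rfl, rfl⟩
      · exact absurd hcd (hl _ _)
    · exact absurd hbc (hl _ _)
  · rcases hbc with ⟨v', w, hvw, rfl, rfl⟩ | hbc
    · exact absurd hab (hr _ _)
    · rcases hcd with ⟨w', x, hwx, rfl, rfl⟩ | hcd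
      · exact absurd hbc (hr _ _)
      · exact Or.inr (hRu _ _ _ _ hab hbc hcd)

/-- An operation on `H` lifts to the disjoint union with `R`. -/
theorem OpStep.glue {sA sB : Bool} {op : Op} {H H' : BGraph} (hs : OpStep sA sB op H H')
    {f : ℕ → ℕ} (hf : Function.Injective f) {R : BGraph} (hR : Bipartite R)
    (hfR : ∀ n, f n ∉ verts R) : ∃ op', OpStep sA sB op' (glue f R H) (glue f R H') := by
  have hl : ∀ n u, ¬ R.Adj (f n) u := fun n u h' => hfR n (hR.mem_left h')
  have hr : ∀ n u, ¬ R.Adj u (f n) := fun n u h' => hfR n (hR.mem_right h')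
  have hmemA : ∀ {K : BGraph} {n}, f n ∈ (BCE.glue f R K).A → n ∈ K.A := by
    rintro K n (⟨m, hm, hmn⟩ | h')
    · exact hf hmn ▸ hm
    · exact absurd (Or.inl h') (hfR n)
  have hmemB : ∀ {K : BGraph} {n}, f n ∈ (BCE.glue f R K).B → n ∈ K.B := by
    rintro K n (⟨m, hm, hmn⟩ | h')
    · exact hf hmn ▸ hm
    · exact absurd (Or.inr h') (hfR n)
  have hadjf : ∀ {K : BGraph} {m n}, (BCE.glue f R K).Adj (f m) (f n) ↔ K.Adj m n := by
    intro K m n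
    constructor
    · rintro (⟨u, v, huv, hu, hv⟩ | h')
      · exact hf hu ▸ hf hv ▸ huv
      · exact absurd h' (hl _ _)
    · exact fun h' => Or.inl ⟨m, n, h', rfl, rfl⟩
  cases hs with
  | @del _ _ u v huv hA hB hadj =>
    refine ⟨Op.del (f u) (f v), OpStep.del (hadjf.2 huv) (by simp [BCE.glue, hA])
      (by simp [BCE.glue, hB]) ?_⟩
    intro x y
    simp only [BCE.glue, hadj]
    constructor
    · rintro (⟨p, q, ⟨h1, h2⟩, rfl, rfl⟩ | h')
      · exact ⟨Or.inl ⟨p, q, h1, rfl, rfl⟩, by simpa only [hf.eq_iff] using h2⟩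
      · refine ⟨Or.inr h', ?_⟩
        rintro (⟨rfl, -⟩ | ⟨rfl, -⟩) <;> exact hl _ _ h'
    · rintro ⟨⟨p, q, h1, rfl, rfl⟩ | h', h2⟩
      · exact Or.inl ⟨p, q, ⟨h1, by simpa only [hf.eq_iff] using h2⟩, rfl, rfl⟩
      · exact Or.inr h'
  | @add _ _ u v hu hv huv hA hB hadj =>
    refine ⟨Op.add (f u) (f v), OpStep.add (Or.inl ⟨u, hu, rfl⟩) (Or.inl ⟨v, hv, rfl⟩)
      (fun h' => huv (hadjf.1 h')) (by simp [BCE.glue, hA]) (by simp [BCE.glue, hB]) ?_⟩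
    intro x y
    simp only [BCE.glue, hadj]
    constructor
    · rintro (⟨p, q, h1 | ⟨rfl, rfl⟩ | ⟨rfl, rfl⟩, rfl, rfl⟩ | h')
      · exact Or.inl (Or.inl ⟨p, q, h1, rfl, rfl⟩)
      · exact Or.inr (Or.inl ⟨rfl, rfl⟩)
      · exact Or.inr (Or.inr ⟨rfl, rfl⟩)
      · exact Or.inl (Or.inr h')
    · rintro ((⟨p, q, h1, rfl, rfl⟩ | h') | ⟨rfl, rfl⟩ | ⟨rfl, rfl⟩)
      · exact Or.inl ⟨p, q, Or.inl h1, rfl, rfl⟩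
      · exact Or.inr h'
      · exact Or.inl ⟨u, v, Or.inr (Or.inl ⟨rfl, rfl⟩), rfl, rfl⟩
      · exact Or.inl ⟨v, u, Or.inr (Or.inr ⟨rfl, rfl⟩), rfl, rfl⟩
  | @split _ _ v v' N1 N2 hside hfresh hcover hA hB hadj =>
    refine ⟨Op.split (f v) (f v') (f '' N1) (f '' N2), OpStep.split ?_ ?_ ?_ ?_ ?_ ?_⟩
    · exact hside.imp (fun h' => ⟨Or.inl ⟨v, h'.1, rfl⟩, h'.2⟩)
        (fun h' => ⟨Or.inl ⟨v, h'.1, rfl⟩, h'.2⟩)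
    · exact fun h' => hfresh (h'.imp hmemA hmemB)
    · rw [← Set.image_union, hcover]
      ext x
      simp only [nbhd, BCE.glue, Set.mem_image, Set.mem_ofPred_eq]
      constructor
      · rintro ⟨u, hu, rfl⟩
        exact Or.inl ⟨v, u, hu, rfl, rfl⟩
      · rintro (⟨v₁, u, hu, hv, rfl⟩ | h')
        · exact ⟨u, hf hv ▸ hu, rfl⟩
        · exact absurd h' (hl _ _)
    · intro h'
      obtain ⟨eA, eB⟩ := hA (hmemA h')
      simp [BCE.glue, eA, eB, Set.image_insert_eq, Set.insert_union]
    · intro h'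
      obtain ⟨eA, eB⟩ := hB (hmemB h')
      simp [BCE.glue, eA, eB, Set.image_insert_eq, Set.insert_union]
    · intro x y
      simp only [BCE.glue, hadj, Set.mem_image]
      constructor
      · rintro (⟨u, w, h', rfl, rfl⟩ | h')
        · rcases h' with ⟨h1, h2, h3⟩ | ⟨rfl, h1⟩ | ⟨rfl, h1⟩ | ⟨rfl, h1⟩ | ⟨rfl, h1⟩
          · exact Or.inl ⟨Or.inl ⟨u, w, h1, rfl, rfl⟩, hf.ne h2, hf.ne h3⟩
          · exact Or.inr (Or.inl ⟨rfl, w, h1, rfl⟩)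
          · exact Or.inr (Or.inr (Or.inl ⟨rfl, u, h1, rfl⟩))
          · exact Or.inr (Or.inr (Or.inr (Or.inl ⟨rfl, w, h1, rfl⟩)))
          · exact Or.inr (Or.inr (Or.inr (Or.inr ⟨rfl, u, h1, rfl⟩)))
        · refine Or.inl ⟨Or.inr h', ?_, ?_⟩
          · rintro rfl
            exact hl _ _ h'
          · rintro rfl
            exact hr _ _ h'
      · rintro (⟨⟨u, w, h1, rfl, rfl⟩ | h', h2, h3⟩ | ⟨rfl, w, h1, rfl⟩ | ⟨rfl, w, h1, rfl⟩ |
          ⟨rfl, w, h1, rfl⟩ | ⟨rfl, w, h1, rfl⟩)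
        · exact Or.inl ⟨u, w, Or.inl ⟨h1, ne_of_apply_ne f h2, ne_of_apply_ne f h3⟩, rfl, rfl⟩
        · exact Or.inr h'
        · exact Or.inl ⟨_, _, Or.inr (Or.inl ⟨rfl, h1⟩), rfl, rfl⟩
        · exact Or.inl ⟨_, _, Or.inr (Or.inr (Or.inl ⟨rfl, h1⟩)), rfl, rfl⟩
        · exact Or.inl ⟨_, _, Or.inr (Or.inr (Or.inr (Or.inl ⟨rfl, h1⟩))), rfl, rfl⟩
        · exact Or.inl ⟨_, _, Or.inr (Or.inr (Or.inr (Or.inr ⟨rfl, h1⟩))), rfl, rfl⟩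

/-- A solution for `H` lifts to its disjoint union with a union of bicliques. -/
theorem Solves.glue {sA sB : Bool} {L : List Op} {H : BGraph} (hL : Solves sA sB L H)
    {f : ℕ → ℕ} (hf : Function.Injective f) {R : BGraph} (hR : Bipartite R)
    (hfR : ∀ n, f n ∉ verts R) (hRu : IsBicliqueUnion R) :
    ∃ L', L'.length = L.length ∧ Solves sA sB L' (glue f R H) := by
  induction L generalizing H with
  | nil =>
    obtain ⟨H', rfl, hH⟩ := hL
    exact ⟨[], rfl, _, rfl, hRu.glue hf hR hfR hH⟩
  | cons op L ih =>
    obtain ⟨H'', ⟨H', hs, hseq⟩, hH⟩ := hL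
    obtain ⟨op', hs'⟩ := hs.glue hf hR hfR
    obtain ⟨L', hlen, K, hseq', hK⟩ := ih ⟨H'', hseq, hH⟩
    exact ⟨op' :: L', by simp [hlen], K, ⟨_, hs', hseq'⟩, hK⟩

/-- The graph `G` without the edge `uv`. -/
def deleteEdge (G : BGraph) (u v : ℕ) : BGraph where
  A := G.A
  B := G.B
  finA := G.finA
  finB := G.finB
  Adj := fun x y => G.Adj x y ∧ ¬((x = u ∧ y = v) ∨ (x = v ∧ y = u))
  symm := fun x y h => ⟨G.symm x y h.1, by have := h.2; tauto⟩

theorem opStep_deleteEdge {sA sB : Bool} {G : BGraph} {u v : ℕ} (h : G.Adj u v) :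
    OpStep sA sB (Op.del u v) G (deleteEdge G u v) :=
  OpStep.del h rfl rfl fun _ _ => Iff.rfl

/-- Deleting all edges solves any bipartite graph. -/
theorem exists_solves (sA sB : Bool) {G : BGraph} (h : Bipartite G) :
    ∃ L, Solves sA sB L G := by
  induction hn : {p : ℕ × ℕ | G.Adj p.1 p.2}.ncard using Nat.strong_induction_on
    generalizing G with
  | _ n ih =>
    by_cases hE : ∃ u v, G.Adj u v
    · obtain ⟨u, v, huv⟩ := hE
      have hfin : {p : ℕ × ℕ | G.Adj p.1 p.2}.Finite := by
        have hV : (verts G).Finite := G.finA.union G.finB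
        exact (hV.prod hV).subset fun p hp => ⟨h.mem_left hp, h.mem_right hp⟩
      have hs : OpStep sA sB (Op.del u v) G (deleteEdge G u v) := opStep_deleteEdge huv
      have hlt : {p : ℕ × ℕ | (deleteEdge G u v).Adj p.1 p.2}.ncard < n := by
        rw [← hn]
        refine Set.ncard_lt_ncard ⟨fun p hp => hp.1, fun hsub => ?_⟩ hfin
        exact (hsub (show (u, v) ∈ _ from huv)).2 (Or.inl ⟨rfl, rfl⟩)
      obtain ⟨L, G', hseq, hG⟩ := ih _ hlt (hs.bipartite h) rfl
      exact ⟨_ :: L, G', ⟨_, hs, hseq⟩, hG⟩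
    · exact ⟨[], G, rfl, fun a b _ _ hab => absurd ⟨a, b, hab⟩ hE⟩

/-- Some injection fixes `S` and avoids a finite set disjoint from `S`. -/
theorem exists_injective_fixing {S F : Set ℕ} (hS : S.Finite) (hF : F.Finite)
    (hdisj : Disjoint S F) :
    ∃ f : ℕ → ℕ, Function.Injective f ∧ (∀ n ∈ S, f n = n) ∧ ∀ n, f n ∉ F := by
  classical
  obtain ⟨M, hM⟩ := (hS.union hF).bddAbove
  refine ⟨fun n => if n ∈ S then n else n + M + 1, fun m n hmn => ?_, fun n hn => if_pos hn,
    fun n hn => ?_⟩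
  · have hm : m ∈ S → m ≤ M := fun h => hM (Or.inl h)
    have hn : n ∈ S → n ≤ M := fun h => hM (Or.inl h)
    grind
  · by_cases h : n ∈ S
    · simp only [h, if_true] at hn
      exact Set.disjoint_left.1 hdisj h hn
    · simp only [h, if_false] at hn
      have := hM (Or.inr hn)
      omega

/-- If `y` has a single neighbour in `Y` and its other side `X` forms a biclique with it,
deleting that edge reduces `G` to the subgraph induced by `Y`. -/
theorem Solves.of_induce {sA sB : Bool} {G : BGraph} (hbip : Bipartite G) {y z : ℕ}
    {X Y : Set ℕ} (hy : y ∈ verts G)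
    (hpart : X ∪ Y = verts G \ {y}) (hdisj : Disjoint X Y)
    (hsep : ∀ u ∈ X, ∀ v ∈ Y, ¬ G.Adj u v) (hbic : IsBicliqueOn G (insert y X))
    (hNy : nbhd G y ∩ Y = {z}) {L : List Op} (hL : Solves sA sB L (induce G Y)) :
    ∃ L', L'.length = 1 + L.length ∧ Solves sA sB L' G := by
  have hmem : ∀ u, u ∈ verts G ↔ u = y ∨ u ∈ X ∨ u ∈ Y := fun u => by
    have := congrArg (u ∈ ·) hpart
    simp only [Set.mem_union, Set.mem_sdiff, Set.mem_singleton_iff, eq_iff_iff] at this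
    by_cases huy : u = y
    · simp [huy, hy]
    · simp [this, huy]
  have hyXY : y ∉ X ∪ Y := by simp [hpart]
  have hyX : y ∉ X := fun h => hyXY (Or.inl h)
  have hyY : y ∉ Y := fun h => hyXY (Or.inr h)
  have hXY := Set.disjoint_left.1 hdisj
  have hYF : Disjoint Y (insert y X) := by
    rw [Set.disjoint_insert_right]
    exact ⟨hyY, hdisj.symm⟩
  have hz : ∀ u, G.Adj y u ∧ u ∈ Y ↔ u = z := fun u => by
    change u ∈ nbhd G y ∩ Y ↔ u ∈ ({z} : Set ℕ)
    rw [hNy]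
  have hV : (verts G).Finite := G.finA.union G.finB
  obtain ⟨f, hf, hfix, havoid⟩ := exists_injective_fixing
    (hV.subset fun u hu => (hmem u).2 (Or.inr (Or.inr hu)))
    (hV.subset fun u (hu : u ∈ insert y X) => (hmem u).2 (hu.imp_right Or.inl)) hYF
  have hRu : IsBicliqueUnion (induce G (insert y X)) := by
    rintro a b c d ⟨hab, ha, hb⟩ ⟨hbc, -, hc⟩ ⟨hcd, -, hd⟩
    refine ⟨?_, ha, hd⟩
    have hAB := Set.disjoint_left.1 hbip.1
    have h1 := hbip.2 _ _ hab
    have h2 := hbip.2 _ _ hbc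
    have h3 := hbip.2 _ _ hcd
    rcases h1 with ⟨haA, hbB⟩ | ⟨haB, hbA⟩
    · exact hbic a ⟨ha, haA⟩ d ⟨hd, by grind⟩
    · exact G.symm _ _ (hbic d ⟨hd, by grind⟩ a ⟨ha, haB⟩)
  obtain ⟨L', hlen, K, hseq, hK⟩ := hL.glue hf (hbip.induce (insert y X))
    (fun n hn => havoid n (hn.elim And.right And.right)) hRu
  have himage : ∀ C ⊆ verts G, f '' (C ∩ Y) ∪ C ∩ insert y X = C := by
    intro C hC
    have : f '' (C ∩ Y) = C ∩ Y := by
      rw [Set.image_congr fun u hu => hfix u hu.2, Set.image_id']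
    rw [this]
    ext u
    have := fun hu => (hmem u).1 (@hC u hu)
    simp only [Set.mem_union, Set.mem_inter_iff, Set.mem_insert_iff]
    tauto
  have hglue : BCE.glue f (induce G (insert y X)) (induce G Y) = deleteEdge G y z := by
    refine BGraph.ext_of (himage _ Set.subset_union_left) (himage _ Set.subset_union_right) ?_
    intro u v
    have hinner : (∃ a b, (induce G Y).Adj a b ∧ f a = u ∧ f b = v) ↔ (induce G Y).Adj u v := by
      constructor
      · rintro ⟨a, b, hab, rfl, rfl⟩
        rwa [hfix a hab.2.1, hfix b hab.2.2]
      · exact fun h => ⟨u, v, h, hfix u h.2.1, hfix v h.2.2⟩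
    simp only [BCE.glue, hinner]
    simp only [induce, deleteEdge, Set.mem_insert_iff]
    have h1 := @Bipartite.mem_left G hbip u v
    have h2 := @Bipartite.mem_right G hbip u v
    rw [hmem] at h1 h2
    have h3 := hsep u
    have h4 := hsep v
    have h5 := hz u
    have h6 := hz v
    have h7 := G.symm u v
    have h8 := hz z
    have h9 := @hXY u
    have h10 := @hXY v
    grind
  rw [hglue] at hseq
  exact ⟨Op.del y z :: L', by simp [hlen, add_comm], K,
    ⟨_, opStep_deleteEdge ((hz z).2 rfl).1, hseq⟩, hK⟩

theorem sInf_length_eq_one_add {P Q : List Op → Prop} (hQ : ∃ L, Q L)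
    (hup : ∀ L, Q L → ∃ L', L'.length = 1 + L.length ∧ P L')
    (hdown : ∀ L, P L → ∃ L', Q L' ∧ L'.length < L.length) :
    sInf {n | ∃ L, L.length = n ∧ P L} = 1 + sInf {n | ∃ L, L.length = n ∧ Q L} := by
  obtain ⟨L₀, hL₀⟩ := hQ
  obtain ⟨L₁, hlen₁, hL₁⟩ :=
    Nat.sInf_mem (s := {n | ∃ L, L.length = n ∧ Q L}) ⟨_, L₀, rfl, hL₀⟩
  obtain ⟨L₂, hlen₂, hL₂⟩ := hup L₁ hL₁
  obtain ⟨L₃, hlen₃, hL₃⟩ :=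
    Nat.sInf_mem (s := {n | ∃ L, L.length = n ∧ P L}) ⟨_, L₂, rfl, hL₂⟩
  obtain ⟨L₄, hL₄, hlt⟩ := hdown L₃ hL₃
  have hle₁ := Nat.sInf_le (s := {n | ∃ L, L.length = n ∧ P L}) ⟨L₂, rfl, hL₂⟩
  have hle₂ := Nat.sInf_le (s := {n | ∃ L, L.length = n ∧ Q L}) ⟨L₄, rfl, hL₄⟩
  omega

/-- Let `T = (A, B, E)` be a tree and `y` a cut vertex
partitioning `V(T) \ {y}` into `X` and `Y` such that the subgraph induced by
`X ∪ {y}` is a biclique, some vertex of `X` is at distance two from `y`, and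
`|N(y) ∩ Y| = 1`.  Then `bceovs(T, A) = 1 + bceovs(T[Y], A)` and
`bcevs(T) = 1 + bcevs(T[Y])`. -/
theorem tree_cut_single (G : BGraph) (hbip : Bipartite G) (htree : IsTreeB G)
    (y : ℕ) (hy : y ∈ verts G) (X Y : Set ℕ)
    (hpart : X ∪ Y = verts G \ {y}) (hdisj : Disjoint X Y)
    (hsep : ∀ u ∈ X, ∀ v ∈ Y, ¬ G.Adj u v)
    (hbic : IsBicliqueOn G (insert y X))
    (hdist2 : ∃ a ∈ X, ∃ x, G.Adj y x ∧ G.Adj x a ∧ ¬ G.Adj y a ∧ a ≠ y)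
    (hNy : (nbhd G y ∩ Y).ncard = 1) :
    bceovs G = 1 + bceovs (induce G Y) ∧ bcevs G = 1 + bcevs (induce G Y) := by
  obtain ⟨z, hz⟩ := Set.ncard_eq_one.1 hNy
  have hyXY : y ∉ X ∪ Y := by simp [hpart]
  have hYV : Y ⊆ verts G := fun u hu => by
    have : u ∈ verts G \ {y} := hpart ▸ Or.inr hu
    exact this.1
  have htail : HasTail G Y := by
    obtain ⟨a, ha, x, hyx, hxa, -, -⟩ := hdist2
    have hzmem : z ∈ nbhd G y ∩ Y := hz ▸ rfl
    exact ⟨a, x, y, Set.disjoint_left.1 hdisj ha,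
      fun hx => hsep a ha x hx (G.symm _ _ hxa), fun h => hyXY (Or.inr h), G.symm _ _ hxa,
      G.symm _ _ hyx, ⟨z, hzmem.2, hzmem.1⟩, hsep a ha⟩
  have key : ∀ sA sB, sInf {n | ∃ L, L.length = n ∧ Solves sA sB L G} =
      1 + sInf {n | ∃ L, L.length = n ∧ Solves sA sB L (induce G Y)} := fun sA sB =>
    sInf_length_eq_one_add (exists_solves sA sB (hbip.induce Y))
      (fun _ hL => hL.of_induce hbip hy hpart hdisj hsep hbic hz)
      (fun _ hL => by
        obtain ⟨L', hL', -, hlt⟩ := hL.restrict hbip hYV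
        exact ⟨L', hL', hlt htail⟩)
  exact ⟨key true false, key true true⟩

end BCE
end
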